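/- arXiv:cs/0510044 — 5 statements merged into one kernel-verified Lean document; each statement's English description precedes it below -/
import Mathlib

section
/- Fix σ > 0 and α > 0, and let Λ > 0 be the unique positive solution of 1/Λ = σ² + α/(1+Λ). For each integer N ≥ 1 set K = ⌈αN⌉ and let the entries s_{ia} (i ∈ [K], a ∈ [N]) be i.i.d. uniform on {+1, −1}. Then (1/K)·Tr[(I_K + σ^{−2}·S̃ᵀS̃)⁻¹] → 1/(1+Λ) in probability as N → ∞; that is, for every ε > 0, P(|(1/K)·Tr[(I_K + σ^{−2}·S̃ᵀS̃)⁻¹] − 1/(1+Λ)| > ε) → 0 as N → ∞. -/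
open Matrix

/-- Convert a Boolean matrix into a ±1 signature matrix. -/
def toSign {K N : ℕ} (s : Fin K → Fin N → Bool) : Fin K → Fin N → ℝ :=
  fun i a => if s i a then 1 else -1

/-- The N×K matrix S̃ with entries S̃_{ai} = s_{ia}/√N. -/
noncomputable def Stilde {K N : ℕ} (s : Fin K → Fin N → ℝ) : Matrix (Fin N) (Fin K) ℝ :=
  Matrix.of fun a i => s i a / Real.sqrt N

structure GoodM {n : ℕ} (c : ℝ) (A : Matrix (Fin n) (Fin n) ℝ) : Prop where
  symm : Aᵀ = A
  lower : ∀ w : Fin n → ℝ, c * (w ⬝ᵥ w) ≤ w ⬝ᵥ (A *ᵥ w)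

lemma GoodM.isUnit {n : ℕ} {c : ℝ} {A : Matrix (Fin n) (Fin n) ℝ} (hc : 0 < c)
    (h : GoodM c A) : IsUnit A.det := by
  rw [← Matrix.isUnit_iff_isUnit_det, ← Matrix.mulVec_injective_iff_isUnit]
  intro x y hxy
  have h1 := h.lower (x - y)
  have h2 : A *ᵥ (x - y) = 0 := by
    rw [Matrix.mulVec_sub]; exact sub_eq_zero.2 hxy
  rw [h2, dotProduct_zero] at h1
  have h3 : 0 ≤ (x - y) ⬝ᵥ (x - y) := Finset.sum_nonneg fun i _ => mul_self_nonneg _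
  have h4 : (x - y) ⬝ᵥ (x - y) = 0 := by nlinarith
  exact sub_eq_zero.1 (dotProduct_self_eq_zero.1 h4)

lemma GoodM.frob {n : ℕ} {c : ℝ} {A : Matrix (Fin n) (Fin n) ℝ} (hc : 0 < c)
    (h : GoodM c A) : ∑ a, ∑ b, (A⁻¹ a b) ^ 2 ≤ n / c ^ 2 := by
  rw [Finset.sum_comm]
  have key : ∀ b, ∑ a, (A⁻¹ a b) ^ 2 ≤ 1 / c ^ 2 := by
    intro b
    set w : Fin n → ℝ := fun a => A⁻¹ a b with hw
    have hw' : w = A⁻¹ *ᵥ (Pi.single b 1) := by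
      ext a; simp [hw]
    have hA : A *ᵥ w = Pi.single b 1 := by
      rw [hw', Matrix.mulVec_mulVec, Matrix.mul_nonsing_inv _ (h.isUnit hc), Matrix.one_mulVec]
    have h1 := h.lower w
    rw [hA, dotProduct_single, mul_one] at h1
    have h2 : w ⬝ᵥ w = ∑ a, (w a) ^ 2 := by
      simp [dotProduct, sq]
    rw [h2] at h1
    have h3 : (w b) ^ 2 ≤ ∑ a, (w a) ^ 2 :=
      Finset.single_le_sum (f := fun a => (w a) ^ 2) (fun i _ => sq_nonneg _) (Finset.mem_univ b)
    change ∑ a, (w a) ^ 2 ≤ _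
    set t := ∑ a, (w a) ^ 2
    have ht : 0 ≤ t := Finset.sum_nonneg fun i _ => sq_nonneg _
    rw [le_div_iff₀ (by positivity)]
    have h4 : (c * t) ^ 2 ≤ t := le_trans (pow_le_pow_left₀ (by positivity) h1 2) h3
    by_contra hcon
    push Not at hcon
    have h5 : 0 < t := by
      rcases ht.lt_or_eq with h | h
      · exact h
      · rw [← h] at hcon; norm_num at hcon
    nlinarith
  calc _ ≤ ∑ b : Fin n, 1 / c ^ 2 := Finset.sum_le_sum fun b _ => key b
    _ = _ := by simp [div_eq_mul_inv]

lemma GoodM.rank_one {n : ℕ} {c : ℝ} {A : Matrix (Fin n) (Fin n) ℝ} (hc : 0 < c)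
    (h : GoodM c A) (v : Fin n → ℝ) :
    0 ≤ v ⬝ᵥ (A⁻¹ *ᵥ v) ∧
    1 - v ⬝ᵥ ((A + vecMulVec v v)⁻¹ *ᵥ v) = 1 / (1 + v ⬝ᵥ (A⁻¹ *ᵥ v)) ∧
    0 ≤ A⁻¹.trace - (A + vecMulVec v v)⁻¹.trace ∧
    A⁻¹.trace - (A + vecMulVec v v)⁻¹.trace ≤ 1 / c := by
  have hu := h.isUnit hc
  set w := A⁻¹ *ᵥ v with hw
  have hAw : A *ᵥ w = v := by
    rw [hw, Matrix.mulVec_mulVec, Matrix.mul_nonsing_inv _ hu, Matrix.one_mulVec]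
  have hvQ : v ᵥ* A⁻¹ = w := by
    rw [hw, ← Matrix.vecMul_transpose, Matrix.transpose_nonsing_inv, h.symm]
  set x := v ⬝ᵥ w with hx
  have hl := h.lower w
  rw [hAw, dotProduct_comm w v, ← hx] at hl
  have hww : 0 ≤ w ⬝ᵥ w := Finset.sum_nonneg fun i _ => mul_self_nonneg _
  have hx0 : 0 ≤ x := le_trans (by positivity) hl
  have hx1 : (1 + x) ≠ 0 := by positivity
  have hinv : (A + vecMulVec v v)⁻¹ = A⁻¹ - (1 + x)⁻¹ • vecMulVec w w := by
    apply Matrix.inv_eq_right_inv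
    rw [add_mul, mul_sub, mul_sub, Matrix.mul_nonsing_inv _ hu, Matrix.mul_smul, Matrix.mul_smul,
      Matrix.mul_vecMulVec, hAw, Matrix.vecMulVec_mul, hvQ, Matrix.vecMulVec_mul_vecMulVec, ← hx,
      Matrix.vecMulVec_smul, smul_smul]
    ext i j
    simp only [Matrix.add_apply, Matrix.sub_apply, Matrix.smul_apply, smul_eq_mul]
    field_simp
    ring
  refine ⟨hx0, ?_, ?_⟩
  · rw [hinv, Matrix.sub_mulVec, ← hw, Matrix.smul_mulVec, Matrix.vecMulVec_mulVec]
    simp only [dotProduct_sub, dotProduct_smul, smul_eq_mul, ← hx, dotProduct_comm w v,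
      op_smul_eq_smul]
    field_simp
    ring
  · have : A⁻¹.trace - (A + vecMulVec v v)⁻¹.trace = (w ⬝ᵥ w) / (1 + x) := by
      rw [hinv, Matrix.trace_sub, Matrix.trace_smul, Matrix.trace_vecMulVec, smul_eq_mul]
      ring
    rw [this]
    refine ⟨by positivity, ?_⟩
    rw [div_le_div_iff₀ (by positivity) hc]
    linarith

lemma goodM_sum {n : ℕ} {ι : Type*} (c : ℝ) (T : Finset ι) (v : ι → Fin n → ℝ) :
    GoodM c (c • (1 : Matrix (Fin n) (Fin n) ℝ) + ∑ j ∈ T, vecMulVec (v j) (v j)) := by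
  constructor
  · rw [Matrix.transpose_add, Matrix.transpose_smul, Matrix.transpose_one, Matrix.transpose_sum]
    simp [Matrix.transpose_vecMulVec]
  · intro w
    rw [Matrix.add_mulVec, Matrix.smul_mulVec, Matrix.one_mulVec, Matrix.sum_mulVec,
      dotProduct_add, dotProduct_smul, dotProduct_sum, smul_eq_mul]
    have : 0 ≤ ∑ j ∈ T, w ⬝ᵥ (vecMulVec (v j) (v j) *ᵥ w) := by
      apply Finset.sum_nonneg
      intro j _
      rw [Matrix.vecMulVec_mulVec]
      rw [op_smul_eq_smul, dotProduct_smul, smul_eq_mul, dotProduct_comm w]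
      exact mul_self_nonneg _
    linarith

lemma woodbury {n k : ℕ} (c : ℝ) (hc : 0 < c) (v : Fin k → Fin n → ℝ)
    (S : Matrix (Fin n) (Fin k) ℝ) (hS : S = Matrix.of fun a i => v i a) :
    let B := c • (1 : Matrix (Fin n) (Fin n) ℝ) + ∑ j, vecMulVec (v j) (v j)
    ((1 + c⁻¹ • (Sᵀ * S) : Matrix (Fin k) (Fin k) ℝ)⁻¹).trace = ∑ i, (1 - v i ⬝ᵥ (B⁻¹ *ᵥ v i)) ∧
    ((1 + c⁻¹ • (Sᵀ * S) : Matrix (Fin k) (Fin k) ℝ)⁻¹).trace = k - n + c * B⁻¹.trace := by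
  intro B
  have hu : IsUnit B.det := (goodM_sum c Finset.univ v).isUnit hc
  have hB : B = c • (1 : Matrix (Fin n) (Fin n) ℝ) + S * Sᵀ := by
    simp only [B, hS]
    congr 1
    ext a b
    simp [Matrix.sum_apply, Matrix.mul_apply, vecMulVec_apply]
  have hSS : S * Sᵀ = B - c • 1 := by rw [hB]; simp
  have hinv : (1 + c⁻¹ • (Sᵀ * S) : Matrix (Fin k) (Fin k) ℝ)⁻¹ = 1 - Sᵀ * B⁻¹ * S := by
    apply Matrix.inv_eq_right_inv
    have e : (Sᵀ * S) * (Sᵀ * B⁻¹ * S) = Sᵀ * S - c • (Sᵀ * B⁻¹ * S) := by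
      calc (Sᵀ * S) * (Sᵀ * B⁻¹ * S) = Sᵀ * ((S * Sᵀ) * B⁻¹) * S := by
            simp only [Matrix.mul_assoc]
        _ = _ := by
            rw [hSS, sub_mul, Matrix.mul_nonsing_inv _ hu, Matrix.smul_mul, Matrix.one_mul,
              Matrix.mul_sub, Matrix.sub_mul, Matrix.mul_one, Matrix.mul_smul, Matrix.smul_mul]
    rw [add_mul, one_mul, Matrix.smul_mul, mul_sub, mul_one, e, smul_sub, smul_sub, smul_smul,
      inv_mul_cancel₀ hc.ne', one_smul]
    abel
  rw [hinv]
  constructor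
  · rw [Matrix.trace]
    apply Finset.sum_congr rfl
    intro i _
    simp only [Matrix.diag_apply, Matrix.sub_apply, Matrix.one_apply_eq]
    congr 1
    rw [Matrix.mul_assoc, Matrix.mul_apply]
    simp [dotProduct, mulVec, Matrix.mul_apply, hS]
  · rw [Matrix.trace_sub, Matrix.mul_assoc, Matrix.trace_mul_comm, Matrix.mul_assoc, hSS, mul_sub,
      Matrix.nonsing_inv_mul _ hu, Matrix.trace_sub, Matrix.mul_smul, Matrix.mul_one,
      Matrix.trace_smul]
    simp
    ring

def sg (b : Bool) : ℝ := if b then 1 else -1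

lemma sum_bool_cons {n : ℕ} (f : (Fin (n + 1) → Bool) → ℝ) :
    ∑ t, f t = ∑ t : Fin n → Bool, (f (Fin.cons true t) + f (Fin.cons false t)) := by
  rw [← (Fin.consEquiv (fun _ : Fin (n+1) => Bool)).sum_comp, Fintype.sum_prod_type,
    Finset.sum_add_distrib]
  simp [Fin.consEquiv]

lemma lin_moment {n : ℕ} (u : Fin n → ℝ) :
    ∑ t : Fin n → Bool, (∑ a, u a * sg (t a)) ^ 2 = 2 ^ n * ∑ a, u a ^ 2 := by
  induction n with
  | zero => simp
  | succ n ih =>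
    rw [sum_bool_cons]
    have h := ih (fun a => u a.succ)
    simp only [Fin.sum_univ_succ, Fin.cons_zero, Fin.cons_succ]
    have e : ∀ t : Fin n → Bool, (u 0 * sg true + ∑ a : Fin n, u a.succ * sg (t a)) ^ 2 +
        (u 0 * sg false + ∑ a : Fin n, u a.succ * sg (t a)) ^ 2 =
        2 * u 0 ^ 2 + 2 * (∑ a : Fin n, u a.succ * sg (t a)) ^ 2 := by
      intro t; simp only [sg]; norm_num; ring
    rw [Finset.sum_congr rfl fun t _ => e t, Finset.sum_add_distrib, ← Finset.mul_sum, ← Finset.mul_sum, h]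
    simp
    ring

lemma quad_moment {n : ℕ} (Q : Fin n → Fin n → ℝ) :
    ∑ t : Fin n → Bool, (∑ a, ∑ b, Q a b * sg (t a) * sg (t b) - ∑ a, Q a a) ^ 2 ≤
      2 ^ n * (2 * ∑ a, ∑ b, Q a b ^ 2) := by
  induction n with
  | zero => simp
  | succ n ih =>
    rw [sum_bool_cons]
    have h := ih (fun a b => Q a.succ b.succ)
    have hl := lin_moment (fun a : Fin n => Q 0 a.succ + Q a.succ 0)
    simp only [Fin.sum_univ_succ, Fin.cons_zero, Fin.cons_succ]
    have e : ∀ t : Fin n → Bool, ∀ s : Bool,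
        (Q 0 0 * sg s * sg s + ∑ i : Fin n, Q 0 i.succ * sg s * sg (t i) +
          ∑ i : Fin n, (Q i.succ 0 * sg (t i) * sg s +
           ∑ j : Fin n, Q i.succ j.succ * sg (t i) * sg (t j)) -
          (Q 0 0 + ∑ i : Fin n, Q i.succ i.succ)) =
        sg s * (∑ a : Fin n, (Q 0 a.succ + Q a.succ 0) * sg (t a)) +
        (∑ i : Fin n, ∑ j : Fin n, Q i.succ j.succ * sg (t i) * sg (t j)
          - ∑ i : Fin n, Q i.succ i.succ) := by
      intro t s
      have h1 : sg s * sg s = 1 := by cases s <;> simp [sg]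
      rw [mul_assoc, h1, Finset.mul_sum, Finset.sum_add_distrib]
      have : ∑ i : Fin n, sg s * ((Q 0 i.succ + Q i.succ 0) * sg (t i)) =
        ∑ i : Fin n, Q 0 i.succ * sg s * sg (t i) + ∑ i : Fin n, Q i.succ 0 * sg (t i) * sg s := by
        rw [← Finset.sum_add_distrib]
        exact Finset.sum_congr rfl fun i _ => by ring
      rw [this]; ring
    simp only [e]
    have e2 : ∀ p q : ℝ, (sg true * p + q) ^ 2 + (sg false * p + q) ^ 2 = 2 * p ^ 2 + 2 * q ^ 2 := by
      intro p q; simp only [sg]; norm_num; ring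
    simp only [e2]
    rw [Finset.sum_add_distrib, ← Finset.mul_sum, ← Finset.mul_sum, hl, Finset.sum_add_distrib]
    have h3 : ∑ a : Fin n, (Q 0 a.succ + Q a.succ 0) ^ 2 ≤
        2 * ∑ a : Fin n, Q 0 a.succ ^ 2 + 2 * ∑ a : Fin n, Q a.succ 0 ^ 2 := by
      rw [Finset.mul_sum, Finset.mul_sum, ← Finset.sum_add_distrib]
      exact Finset.sum_le_sum fun a _ => by nlinarith [sq_nonneg (Q 0 a.succ - Q a.succ 0)]
    have hp : (0 : ℝ) < 2 ^ n := by positivity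
    have h4 := mul_le_mul_of_nonneg_left h3 hp.le
    have h5 : 0 ≤ 2 ^ n * Q 0 0 ^ 2 := by positivity
    rw [pow_succ]
    nlinarith

lemma sum_update {ι X : Type*} [Fintype ι] [DecidableEq ι] [Fintype X] (i : ι)
    (f : (ι → X) → ℝ) :
    ∑ s : ι → X, ∑ t : X, f (Function.update s i t) = Fintype.card X * ∑ s : ι → X, f s := by
  have hinv : Function.Involutive
      (fun p : (ι → X) × X => ((Function.update p.1 i p.2, p.1 i) : (ι → X) × X)) := by
    rintro ⟨s, t⟩; simp
  have h := Equiv.sum_comp (hinv.toPerm) (fun p : (ι → X) × X => f p.1)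
  rw [Fintype.sum_prod_type, Fintype.sum_prod_type] at h
  simpa [Finset.mul_sum] using h

lemma GoodM.trace_nonneg {n : ℕ} {c : ℝ} {A : Matrix (Fin n) (Fin n) ℝ} (hc : 0 < c)
    (h : GoodM c A) : 0 ≤ A⁻¹.trace := by
  apply Finset.sum_nonneg
  intro i _
  have := (h.rank_one hc (Pi.single i 1)).1
  simpa using this

noncomputable def VV {K N : ℕ} (s : Fin K → Fin N → Bool) (i : Fin K) : Fin N → ℝ :=
  fun a => sg (s i a) / Real.sqrt N

noncomputable def AA {K N : ℕ} (c : ℝ) (s : Fin K → Fin N → Bool) (i : Fin K) :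
    Matrix (Fin N) (Fin N) ℝ :=
  c • (1 : Matrix (Fin N) (Fin N) ℝ) + ∑ j ∈ Finset.univ.erase i, vecMulVec (VV s j) (VV s j)

noncomputable def BB {K N : ℕ} (c : ℝ) (s : Fin K → Fin N → Bool) :
    Matrix (Fin N) (Fin N) ℝ :=
  c • (1 : Matrix (Fin N) (Fin N) ℝ) + ∑ j, vecMulVec (VV s j) (VV s j)

lemma BB_eq {K N : ℕ} (c : ℝ) (s : Fin K → Fin N → Bool) (i : Fin K) :
    BB c s = AA c s i + vecMulVec (VV s i) (VV s i) := by
  rw [BB, AA, add_assoc, Finset.sum_erase_add _ _ (Finset.mem_univ i)]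

lemma AA_update {K N : ℕ} (c : ℝ) (s : Fin K → Fin N → Bool) (i : Fin K) (t : Fin N → Bool) :
    AA c (Function.update s i t) i = AA c s i := by
  unfold AA
  congr 1
  apply Finset.sum_congr rfl
  intro j hj
  have : VV (Function.update s i t) j = VV s j := by
    ext a; simp [VV, Function.update_of_ne (Finset.ne_of_mem_erase hj)]
  rw [this]

lemma moment_i {K N : ℕ} (hN : 0 < N) (c : ℝ) (hc : 0 < c) (i : Fin K) :
    ∑ s : Fin K → Fin N → Bool,
      (VV s i ⬝ᵥ ((AA c s i)⁻¹ *ᵥ VV s i) - (AA c s i)⁻¹.trace / N) ^ 2 ≤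
    2 ^ (K * N) * (2 / (N * c ^ 2)) := by
  have hNr : (0 : ℝ) < N := by exact_mod_cast hN
  set f : (Fin K → Fin N → Bool) → ℝ := fun s =>
    (VV s i ⬝ᵥ ((AA c s i)⁻¹ *ᵥ VV s i) - (AA c s i)⁻¹.trace / N) ^ 2 with hf
  have h := sum_update i f
  have hin : ∀ s, ∑ t, f (Function.update s i t) ≤ 2 ^ N * (2 / (N * c ^ 2)) := by
    intro s
    set Q := (AA c s i)⁻¹ with hQ
    have e : ∀ t, f (Function.update s i t) =
        ((N : ℝ)⁻¹) ^ 2 * (∑ a, ∑ b, Q a b * sg (t a) * sg (t b) - ∑ a, Q a a) ^ 2 := by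
      intro t
      simp only [hf, AA_update, ← hQ]
      rw [← mul_pow]
      congr 1
      have hv : VV (Function.update s i t) i = fun a => sg (t a) / Real.sqrt N := by
        ext a; simp [VV]
      rw [hv, mul_sub, Matrix.trace, Finset.sum_div, Finset.mul_sum, Finset.mul_sum]
      congr 1
      · simp only [dotProduct, mulVec]
        apply Finset.sum_congr rfl
        intro a _
        rw [Finset.mul_sum, Finset.mul_sum]
        apply Finset.sum_congr rfl
        intro b _
        have : (N : ℝ)⁻¹ = (Real.sqrt N)⁻¹ * (Real.sqrt N)⁻¹ := by
          rw [← mul_inv, Real.mul_self_sqrt hNr.le]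
        rw [this]; ring
      · exact Finset.sum_congr rfl fun a _ => by rw [Matrix.diag_apply]; ring
    rw [Finset.sum_congr rfl fun t _ => e t, ← Finset.mul_sum]
    have h1 := quad_moment (fun a b => Q a b)
    have h2 : ∑ a, ∑ b, Q a b ^ 2 ≤ N / c ^ 2 :=
      (goodM_sum c (Finset.univ.erase i) (VV s)).frob hc
    calc _ ≤ ((N : ℝ)⁻¹) ^ 2 * (2 ^ N * (2 * (N / c ^ 2))) := by gcongr; exact h1.trans (by gcongr)
      _ = _ := by field_simp
  have hsum : ∑ s, ∑ t, f (Function.update s i t) ≤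
      ∑ s : Fin K → Fin N → Bool, 2 ^ N * (2 / (N * c ^ 2)) := Finset.sum_le_sum fun s _ => hin s
  rw [h] at hsum
  simp only [Finset.sum_const, Finset.card_univ, Fintype.card_fun, Fintype.card_bool,
    Fintype.card_fin, nsmul_eq_mul, Nat.cast_pow, Nat.cast_ofNat] at hsum
  rw [pow_mul', ]
  have hp : (0 : ℝ) < 2 ^ N := by positivity
  refine le_of_mul_le_mul_left (hsum.trans_eq ?_) hp
  ring

lemma inv_lip (x y : ℝ) (hx : 0 ≤ x) (hy : 0 ≤ y) : |1 / (1 + x) - 1 / (1 + y)| ≤ |x - y| := by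
  have : 1 / (1 + x) - 1 / (1 + y) = (y - x) / ((1 + x) * (1 + y)) := by
    field_simp; ring
  rw [this, abs_div, abs_sub_comm x y]
  apply div_le_self (abs_nonneg _)
  rw [abs_of_pos (by positivity)]
  nlinarith [mul_nonneg hx hy]

noncomputable def DD {K N : ℕ} (c : ℝ) (s : Fin K → Fin N → Bool) : ℝ :=
  (1 / (K : ℝ)) * ∑ i, (1 - VV s i ⬝ᵥ ((BB c s)⁻¹ *ᵥ VV s i)) - 1 / (1 + (BB c s)⁻¹.trace / N)

lemma moment_D {K N : ℕ} (hK : 0 < K) (hN : 0 < N) (c : ℝ) (hc : 0 < c) :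
    ∑ s : Fin K → Fin N → Bool, (DD c s) ^ 2 ≤ 2 ^ (K * N) * (6 / (N * c ^ 2)) := by
  have hNr : (1 : ℝ) ≤ N := by exact_mod_cast hN
  have hKr : (0 : ℝ) < K := by exact_mod_cast hK
  have hpt : ∀ s : Fin K → Fin N → Bool, (DD c s) ^ 2 ≤ (1 / (K : ℝ)) * ∑ i,
      (2 * (VV s i ⬝ᵥ ((AA c s i)⁻¹ *ᵥ VV s i) - (AA c s i)⁻¹.trace / N) ^ 2
        + 2 / (N * c ^ 2)) := by
    intro s
    set m := (BB c s)⁻¹.trace / N with hm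
    have hm0 : 0 ≤ m := div_nonneg ((goodM_sum c Finset.univ (VV s)).trace_nonneg hc) (by positivity)
    set z : Fin K → ℝ := fun i => 1 / (1 + VV s i ⬝ᵥ ((AA c s i)⁻¹ *ᵥ VV s i)) - 1 / (1 + m) with hz
    have hD : DD c s = (1 / (K : ℝ)) * ∑ i, z i := by
      have hz' : ∑ i, z i = ∑ i, 1 / (1 + VV s i ⬝ᵥ ((AA c s i)⁻¹ *ᵥ VV s i))
          - ∑ i : Fin K, 1 / (1 + m) := by
        simp only [hz]; rw [Finset.sum_sub_distrib]
      rw [hz', mul_sub, DD, ← hm]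
      congr 1
      · congr 1
        apply Finset.sum_congr rfl
        intro i _
        rw [BB_eq c s i]
        exact ((goodM_sum c (Finset.univ.erase i) (VV s)).rank_one hc (VV s i)).2.1
      · simp; field_simp
    have hzi : ∀ i, z i ^ 2 ≤
        2 * (VV s i ⬝ᵥ ((AA c s i)⁻¹ *ᵥ VV s i) - (AA c s i)⁻¹.trace / N) ^ 2
        + 2 / (N * c ^ 2) := by
      intro i
      obtain ⟨h1, -, h3, h4⟩ := (goodM_sum c (Finset.univ.erase i) (VV s)).rank_one hc (VV s i)
      change 0 ≤ VV s i ⬝ᵥ ((AA c s i)⁻¹ *ᵥ VV s i) at h1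
      change 0 ≤ (AA c s i)⁻¹.trace - (AA c s i + vecMulVec (VV s i) (VV s i))⁻¹.trace at h3
      change (AA c s i)⁻¹.trace - (AA c s i + vecMulVec (VV s i) (VV s i))⁻¹.trace ≤ 1 / c at h4
      rw [← BB_eq c s i] at h3 h4
      have hl := inv_lip _ m h1 hm0
      have hl2 : z i ^ 2 ≤ (VV s i ⬝ᵥ ((AA c s i)⁻¹ *ᵥ VV s i) - m) ^ 2 := sq_le_sq.2 hl
      refine hl2.trans ?_
      set x := VV s i ⬝ᵥ ((AA c s i)⁻¹ *ᵥ VV s i)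
      set p := (AA c s i)⁻¹.trace / N with hp
      have hq0 : 0 ≤ p - m := by rw [hp, hm, ← sub_div]; positivity
      have hq1 : p - m ≤ 1 / c / N := by rw [hp, hm, ← sub_div]; gcongr
      have hq2 : (p - m) ^ 2 ≤ 1 / (N * c ^ 2) := by
        calc (p - m) ^ 2 ≤ (1 / c / N) ^ 2 := pow_le_pow_left₀ hq0 hq1 2
          _ = 1 / (N * c ^ 2) * (1 / N) := by field_simp
          _ ≤ 1 / (N * c ^ 2) * 1 := by
            gcongr
            rw [div_le_one (by positivity)]; exact hNr
          _ = _ := mul_one _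
      have : 2 / (N * c ^ 2) = 2 * (1 / (N * c ^ 2)) := by ring
      rw [this]
      nlinarith [sq_nonneg ((x - p) - (p - m))]
    rw [hD, mul_pow]
    have hcs := sq_sum_le_card_mul_sum_sq (s := (Finset.univ : Finset (Fin K))) (f := z)
    simp only [Finset.card_univ, Fintype.card_fin] at hcs
    calc _ ≤ (1 / (K : ℝ)) ^ 2 * (K * ∑ i, z i ^ 2) := by gcongr
      _ = (1 / (K : ℝ)) * ∑ i, z i ^ 2 := by field_simp
      _ ≤ _ := by gcongr with i; exact hzi i
  refine (Finset.sum_le_sum fun s _ => hpt s).trans ?_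
  rw [← Finset.mul_sum, Finset.sum_comm]
  have hi : ∀ i : Fin K, ∑ s : Fin K → Fin N → Bool,
      (2 * (VV s i ⬝ᵥ ((AA c s i)⁻¹ *ᵥ VV s i) - (AA c s i)⁻¹.trace / N) ^ 2
        + 2 / (N * c ^ 2)) ≤ 2 ^ (K * N) * (6 / (N * c ^ 2)) := by
    intro i
    rw [Finset.sum_add_distrib, ← Finset.mul_sum]
    have h := moment_i hN c hc i
    have e : ∑ s : Fin K → Fin N → Bool, 2 / ((N : ℝ) * c ^ 2) =
        2 ^ (K * N) * (2 / (N * c ^ 2)) := by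
      simp only [Finset.sum_const, Finset.card_univ, Fintype.card_fun, Fintype.card_bool,
        Fintype.card_fin, nsmul_eq_mul, Nat.cast_pow, Nat.cast_ofNat, pow_mul']
    rw [e]
    calc _ ≤ 2 * (2 ^ (K * N) * (2 / (N * c ^ 2))) + 2 ^ (K * N) * (2 / (N * c ^ 2)) := by gcongr
      _ = _ := by ring
  calc _ ≤ (1 / (K : ℝ)) * ∑ i : Fin K, 2 ^ (K * N) * (6 / (N * c ^ 2)) := by
        gcongr with i; exact hi i
    _ = _ := by simp; field_simp

lemma det_bound (c κ α Λ m g : ℝ) (hc : 0 < c) (hα : 0 < α) (hκ : 0 ≤ κ) (hΛ : 0 < Λ) (hm : 0 ≤ m)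
    (hTH : 1 / Λ = c + α / (1 + Λ)) (hid : 1 - c * m = κ * (1 - g)) :
    |g - 1 / (1 + Λ)| ≤ |g - 1 / (1 + m)| + (κ * |g - 1 / (1 + m)| + |κ - α|) / c := by
  have h1 : |m - Λ| ≤ (κ * |g - 1 / (1 + m)| + |κ - α|) / c := by
    rw [le_div_iff₀ hc]
    have e1 : 1 - c * Λ - α * (1 - 1 / (1 + Λ)) = 0 := by
      field_simp at hTH ⊢; linarith
    have e2 : (m - Λ) * (c + α / ((1 + m) * (1 + Λ))) =
        κ * (g - 1 / (1 + m)) - (κ - α) * (m / (1 + m)) := by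
      have e3 : (m - Λ) * (α / ((1 + m) * (1 + Λ))) = α * (1 / (1 + Λ) - 1 / (1 + m)) := by
        field_simp; ring
      have e4 : m / (1 + m) = 1 - 1 / (1 + m) := by field_simp; ring
      rw [mul_add, e3, e4]; linear_combination e1 - hid
    have hpos : 0 ≤ α / ((1 + m) * (1 + Λ)) := by positivity
    have hfrac : |m / (1 + m)| ≤ 1 := by
      rw [abs_of_nonneg (by positivity), div_le_one (by positivity)]; linarith
    calc |m - Λ| * c ≤ |m - Λ| * (c + α / ((1 + m) * (1 + Λ))) := by gcongr; linarith
      _ = |κ * (g - 1 / (1 + m)) - (κ - α) * (m / (1 + m))| := by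
        rw [← e2, abs_mul, abs_of_nonneg (a := c + _) (by positivity)]
      _ ≤ |κ * (g - 1 / (1 + m))| + |(κ - α) * (m / (1 + m))| := abs_sub _ _
      _ ≤ _ := by
        rw [abs_mul, abs_mul, abs_of_nonneg hκ]
        gcongr
        exact mul_le_of_le_one_right (abs_nonneg _) hfrac
  have h2 := inv_lip m Λ hm hΛ.le
  calc |g - 1 / (1 + Λ)| ≤ |g - 1 / (1 + m)| + |1 / (1 + m) - 1 / (1 + Λ)| := abs_sub_le _ _ _
    _ ≤ _ := by gcongr; exact h2.trans h1

/-- **Tse–Hanly formula.** With K = ⌈αN⌉ and i.i.d. uniform ±1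
signatures, the per-user MMSE (1/K)·Tr[(I + σ⁻²S̃ᵀS̃)⁻¹] converges in probability to
1/(1+Λ), where Λ is the unique positive solution of 1/Λ = σ² + α/(1+Λ). -/
theorem average_mmse_tendsto_tse_hanly (σ α Λ : ℝ) (hσ : 0 < σ) (hα : 0 < α)
    (hΛ : 0 < Λ) (hTH : 1 / Λ = σ ^ 2 + α / (1 + Λ)) :
    ∀ ε : ℝ, 0 < ε →
      Filter.Tendsto
        (fun N : ℕ =>
          (Nat.card {s : Fin ⌈α * (N : ℝ)⌉₊ → Fin N → Bool //
            ε < |(1 / (⌈α * (N : ℝ)⌉₊ : ℝ)) *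
                ((1 + (σ ^ 2)⁻¹ • ((Stilde (toSign s))ᵀ * Stilde (toSign s)) :
                  Matrix (Fin ⌈α * (N : ℝ)⌉₊) (Fin ⌈α * (N : ℝ)⌉₊) ℝ)⁻¹).trace -
                1 / (1 + Λ)|} : ℝ) /
            2 ^ (⌈α * (N : ℝ)⌉₊ * N))
        Filter.atTop (nhds 0) := by
  intro ε hε
  set c := σ ^ 2 with hcdef
  have hc : 0 < c := by positivity
  set L := 1 + (α + 1) / c with hL
  have hL0 : 0 < L := by positivity
  set δ := ε / 2 / L with hδ
  have hδ0 : 0 < δ := by positivity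
  have hlim : Filter.Tendsto (fun N : ℕ => (6 / (c ^ 2 * δ ^ 2)) * (N : ℝ)⁻¹) Filter.atTop (nhds 0) := by
    simpa using (tendsto_inv_atTop_nhds_zero_nat (𝕜 := ℝ)).const_mul (6 / (c ^ 2 * δ ^ 2))
  refine squeeze_zero' (Filter.Eventually.of_forall fun N => by positivity) ?_ hlim
  obtain ⟨N₀, hN₀⟩ := exists_nat_gt (2 / (c * ε))
  filter_upwards [Filter.eventually_ge_atTop (max 1 N₀)] with N hNge
  have hN : 0 < N := lt_of_lt_of_le (by simp) hNge
  have hNr : (1 : ℝ) ≤ N := by exact_mod_cast hN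
  have hN1 : 2 / (c * ε) < N := hN₀.trans_le (by exact_mod_cast (le_max_right 1 N₀).trans hNge)
  have hNpos : (0 : ℝ) < N := by linarith
  have hKge : α * N ≤ (⌈α * (N : ℝ)⌉₊ : ℝ) := Nat.le_ceil _
  have hKlt : (⌈α * (N : ℝ)⌉₊ : ℝ) < α * N + 1 := Nat.ceil_lt_add_one (by positivity)
  have hK : 0 < ⌈α * (N : ℝ)⌉₊ := Nat.ceil_pos.2 (by positivity)
  generalize ⌈α * (N : ℝ)⌉₊ = K at *
  have hKr : (0 : ℝ) < K := by exact_mod_cast hK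
  set κ : ℝ := K / N with hκ
  have hκ0 : 0 ≤ κ := by positivity
  have hκ1 : |κ - α| ≤ 1 / N := by
    have : κ - α = (K - α * N) / N := by rw [hκ]; field_simp
    rw [this, abs_of_nonneg (div_nonneg (by linarith) hNpos.le)]
    gcongr; linarith
  have hinvN : 1 / (N : ℝ) ≤ 1 := by rw [div_le_one hNpos]; exact hNr
  have hκ2 : κ ≤ α + 1 := by linarith [le_abs_self (κ - α)]
  have hκ3 : |κ - α| / c ≤ ε / 2 := by
    rw [div_le_iff₀ hc]
    refine hκ1.trans ?_
    rw [div_le_iff₀ hNpos]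
    rw [div_lt_iff₀ (by positivity)] at hN1
    nlinarith
  have hbad : ∀ s : Fin K → Fin N → Bool,
      ε < |(1 / (K : ℝ)) * ((1 + c⁻¹ • ((Stilde (toSign s))ᵀ * Stilde (toSign s)) :
                  Matrix (Fin K) (Fin K) ℝ)⁻¹).trace - 1 / (1 + Λ)| → δ ^ 2 ≤ DD c s ^ 2 := by
    intro s hs
    obtain ⟨w1, w2⟩ := woodbury c hc (VV s) (Stilde (toSign s)) rfl
    change _ = ∑ i, (1 - VV s i ⬝ᵥ ((BB c s)⁻¹ *ᵥ VV s i)) at w1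
    change _ = (K : ℝ) - N + c * (BB c s)⁻¹.trace at w2
    set T := ((1 + c⁻¹ • ((Stilde (toSign s))ᵀ * Stilde (toSign s)) :
                  Matrix (Fin K) (Fin K) ℝ)⁻¹).trace
    have hm0 : 0 ≤ (BB c s)⁻¹.trace / N :=
      div_nonneg ((goodM_sum c Finset.univ (VV s)).trace_nonneg hc) (by positivity)
    have hD : DD c s = (1 / (K : ℝ)) * T - 1 / (1 + (BB c s)⁻¹.trace / N) := by
      rw [DD, w1]
    have hid : 1 - c * ((BB c s)⁻¹.trace / N) = κ * (1 - (1 / (K : ℝ)) * T) := by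
      rw [w2, hκ]; field_simp; ring
    have hb := det_bound c κ α Λ _ _ hc hα hκ0 hΛ hm0 hTH hid
    rw [← hD] at hb
    have h1 : ε < |DD c s| * L + ε / 2 := by
      calc ε < _ := hs
        _ ≤ _ := hb
        _ = |DD c s| * (1 + κ / c) + |κ - α| / c := by ring
        _ ≤ _ := by rw [hL]; gcongr
    have h2 : δ ≤ |DD c s| := by
      rw [hδ, div_le_iff₀ hL0]; linarith
    rw [← sq_abs (DD c s)]
    exact pow_le_pow_left₀ hδ0.le h2 2
  have hM := moment_D hK hN c hc
  classical
  rw [Nat.card_eq_fintype_card, Fintype.card_subtype]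
  set F := Finset.univ.filter (fun s : Fin K → Fin N → Bool =>
      ε < |(1 / (K : ℝ)) * ((1 + c⁻¹ • ((Stilde (toSign s))ᵀ * Stilde (toSign s)) :
                  Matrix (Fin K) (Fin K) ℝ)⁻¹).trace - 1 / (1 + Λ)|) with hF
  have hcount : (F.card : ℝ) * δ ^ 2 ≤ 2 ^ (K * N) * (6 / (N * c ^ 2)) := by
    calc (F.card : ℝ) * δ ^ 2 = ∑ s ∈ F, δ ^ 2 := by simp
      _ ≤ ∑ s ∈ F, DD c s ^ 2 := Finset.sum_le_sum fun s hs => hbad s (Finset.mem_filter.1 hs).2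
      _ ≤ ∑ s, DD c s ^ 2 :=
        Finset.sum_le_sum_of_subset_of_nonneg (Finset.subset_univ _) fun s _ _ => sq_nonneg _
      _ ≤ _ := hM
  rw [div_le_iff₀ (by positivity)]
  rw [← le_div_iff₀ (by positivity)] at hcount
  refine hcount.trans_eq ?_
  field_simp
end

section
/- Fix σ > 0, α > 0, and an integer t ≥ 1. There is a constant C = C(t, α, σ) such that the following holds for every integer N ≥ 2 with K = ⌈αN⌉ and s a K×N matrix with i.i.d. entries uniform on {+1, −1}. Let λ*_N > 1 be the unique positive fixed point of λ ↦ 1 + ((N−1)/N)/(σ² + ((K−1)/N)/λ), let λ̂*_N = σ² + ((K−1)/N)/λ*_N, and let L^{(∞)}_N = 1 + 1/λ̂*_N. For a user node i ∈ [K], define δ_i^{(t)} = (1/L^{(∞)}_N)·(−1/(N·λ*_N·λ̂*_N))^t · Σ_π ∏_{r=1}^{t} s_{i_{r−1}, a_r}·s_{i_r, a_r}, where the sum runs over all closed non-reversing walks π = (i = i_0, a_1, i_1, a_2, ..., a_t, i_t = i) of length 2t based at i (with i_r ∈ [K], a_r ∈ [N], i_r ≠ i_{r−1} for 1 ≤ r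 ≤ t, and a_{r+1} ≠ a_r for 1 ≤ r ≤ t−1). Then E[(δ_i^{(t)})²] ≤ C/N; in particular E[(δ_i^{(t)})²] → 0 as N → ∞. -/
open Finset

/-- The set of closed non-reversing walks of length 2t based at user node `i0` on the
complete bipartite graph with K user nodes and N chip nodes: a walk is a pair of
sequences (i₀, i₁, ..., i_t) of user nodes and (a₁, ..., a_t) of chip nodes with
i₀ = i_t = i0, iᵣ ≠ iᵣ₋₁, and aᵣ₊₁ ≠ aᵣ. -/
def walkSet (K N t : ℕ) (i0 : Fin K) :
    Finset ((Fin (t + 1) → Fin K) × (Fin t → Fin N)) :=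
  Finset.univ.filter fun p =>
    p.1 0 = i0 ∧ p.1 (Fin.last t) = i0 ∧
    (∀ r : Fin t, p.1 r.castSucc ≠ p.1 r.succ) ∧
    (∀ r r' : Fin t, (r : ℕ) + 1 = (r' : ℕ) → p.2 r ≠ p.2 r')

/-- The length-2t term δ_i^{(t)} of the Freeman–Weiss path-sum expression:
δ_i^{(t)} = (1/L^∞)·(−1/(N·λ*·λ̂*))ᵗ · Σ_π ∏_{r=1}^t s_{i_{r−1} a_r}·s_{i_r a_r}. -/
noncomputable def deltaPath (K N t : ℕ) (lamS lamH Linf : ℝ)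
    (s : Fin K → Fin N → ℝ) (i0 : Fin K) : ℝ :=
  (1 / Linf) * (-(1 / ((N : ℝ) * lamS * lamH))) ^ t *
    ∑ p ∈ walkSet K N t i0,
      ∏ r : Fin t, s (p.1 r.castSucc) (p.2 r) * s (p.1 r.succ) (p.2 r)

/-- The finite-size BP variance fixed-point map λ ↦ 1 + ((N−1)/N)/(σ² + ((K−1)/N)/λ). -/
noncomputable def bpVarMap (σ : ℝ) (K N : ℕ) (l : ℝ) : ℝ :=
  1 + (((N : ℝ) - 1) / (N : ℝ)) / (σ ^ 2 + (((K : ℝ) - 1) / (N : ℝ)) / l)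

/-- λ̂*_N = σ² + ((K−1)/N)/λ*_N. -/
noncomputable def lamHatStar (σ : ℝ) (K N : ℕ) (lamStar : ℝ) : ℝ :=
  σ ^ 2 + (((K : ℝ) - 1) / (N : ℝ)) / lamStar

lemma smf_new_card {V : Type*} [DecidableEq V] (w : ℕ → V) (m : ℕ) :
    ((range (m + 1)).image w).card =
      ((range m).filter fun j => ∀ k ≤ j, w k ≠ w (j + 1)).card + 1 := by
  induction m with
  | zero => simp
  | succ m ih =>
    rw [Finset.range_add_one (n := m + 1), Finset.image_insert, Finset.range_add_one (n := m),
      Finset.filter_insert]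
    rw [← Finset.range_add_one (n := m)]
    by_cases h : ∀ k ≤ m, w k ≠ w (m + 1)
    · rw [if_pos h, Finset.card_insert_of_notMem, Finset.card_insert_of_notMem, ih]
      · simp
      · intro hh
        obtain ⟨k, hk, hk'⟩ := Finset.mem_image.1 hh
        exact h k (by simpa [Nat.lt_succ_iff] using hk) hk'
    · rw [if_neg h, Finset.insert_eq_of_mem, ih]
      push Not at h
      obtain ⟨k, hk, hk'⟩ := h
      exact Finset.mem_image.2 ⟨k, by simpa [Nat.lt_succ_iff] using hk, hk'⟩

lemma smf_walk_card {V : Type*} [DecidableEq V] (w : ℕ → V) (m n : ℕ) (hn : 1 ≤ n) (hnm : n ≤ m)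
    (H1 : ∀ j < m, ∃ j' < m, j' ≠ j ∧ s(w j', w (j' + 1)) = s(w j, w (j + 1)))
    (H2 : ∀ j, j + 2 ≤ n → w j ≠ w (j + 2)) (H3 : w n = w 0) :
    2 * ((range (m + 1)).image w).card ≤ m := by
  classical
  rw [smf_new_card]
  set New : ℕ → Prop := fun j => ∀ k ≤ j, w k ≠ w (j + 1) with hNew
  -- a new step's edge does not occur earlier
  have A : ∀ j, New j → ∀ i < j, s(w i, w (i + 1)) ≠ s(w j, w (j + 1)) := by
    intro j hj i hij he
    rcases Sym2.eq_iff.1 he with ⟨h1, h2⟩ | ⟨h1, h2⟩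
    · exact hj (i + 1) (by omega) h2
    · exact hj i (by omega) h1
  have hB : ∃ j, j < n ∧ ¬ New j := by
    refine ⟨n - 1, by omega, ?_⟩
    intro h
    apply h 0 (by omega)
    rw [show n - 1 + 1 = n by omega, H3]
  obtain ⟨js, ⟨hjs, hjsN⟩, hmin⟩ : ∃ j, (j < n ∧ ¬ New j) ∧ ∀ i < j, New i := by
    refine ⟨Nat.find hB, Nat.find_spec hB, ?_⟩
    intro i hi
    by_contra hc
    exact Nat.find_min hB hi ⟨by have := (Nat.find_spec hB).1; omega, hc⟩
  have hdist : ∀ i j, i < j → j ≤ js → w i ≠ w j := by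
    intro i j hij hj
    have := hmin (j - 1) (by omega) i (by omega)
    rwa [show j - 1 + 1 = j by omega] at this
  have hfirst : ∀ j, New j → s(w j, w (j + 1)) ≠ s(w js, w (js + 1)) := by
    intro j hj he
    rcases lt_trichotomy j js with h | h | h
    · rcases Sym2.eq_iff.1 he with ⟨h1, h2⟩ | ⟨h1, h2⟩
      · exact hdist _ _ h le_rfl h1
      · rcases Nat.lt_or_ge (j + 1) js with h' | h'
        · exact hdist _ _ h' le_rfl h2
        · have : j + 1 = js := by omega
          subst this
          exact H2 j (by omega) h1
    · exact hjsN (h ▸ hj)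
    · exact A j hj js h he.symm
  choose! f hf1 hf2 hf3 using H1
  have hjsm : js < m := by omega
  have key : ((range m).filter New).card + 2 ≤ ((range m).filter fun j => ¬ New j).card := by
    have hinj : Set.InjOn f ((range m).filter New : Finset ℕ) := by
      intro a ha b hb hab
      simp only [coe_filter, mem_range, Set.mem_ofPred_eq] at ha hb
      have he : s(w a, w (a + 1)) = s(w b, w (b + 1)) := by
        rw [← hf3 a ha.1, ← hf3 b hb.1, hab]
      rcases lt_trichotomy a b with h | h | h
      · exact absurd he (A b hb.2 a h)
      · exact h
      · exact absurd he.symm (A a ha.2 b h)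
    have hdisj : Disjoint (((range m).filter New).image f) {js, f js} := by
      rw [Finset.disjoint_left]
      intro x hx hx'
      obtain ⟨a, ha, rfl⟩ := Finset.mem_image.1 hx
      simp only [mem_filter, mem_range] at ha
      simp only [mem_insert, mem_singleton] at hx'
      apply hfirst a ha.2
      rw [← hf3 a ha.1]
      rcases hx' with h | h
      · rw [h]
      · rw [h, hf3 js hjsm]
    have hc2 : ({js, f js} : Finset ℕ).card = 2 := Finset.card_pair (hf2 js hjsm).symm
    rw [← Finset.card_image_of_injOn hinj, ← hc2, ← Finset.card_union_of_disjoint hdisj]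
    apply Finset.card_le_card
    intro x hx
    simp only [mem_filter, mem_range]
    rcases Finset.mem_union.1 hx with hx | hx
    · obtain ⟨a, ha, rfl⟩ := Finset.mem_image.1 hx
      simp only [mem_filter, mem_range] at ha
      refine ⟨hf1 a ha.1, fun hN => ?_⟩
      rcases lt_trichotomy (f a) a with h | h | h
      · exact A a ha.2 _ h (hf3 a ha.1)
      · exact hf2 a ha.1 h
      · exact A _ hN _ h (hf3 a ha.1).symm
    · simp only [mem_insert, mem_singleton] at hx
      rcases hx with rfl | rfl
      · exact ⟨hjsm, hjsN⟩
      · exact ⟨hf1 js hjsm, fun hN => hfirst _ hN (hf3 js hjsm)⟩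
  have htot := Finset.card_filter_add_card_filter_not (s := range m) New
  rw [Finset.card_range] at htot
  change 2 * (((range m).filter New).card + 1) ≤ m
  omega

/-- counting functions with small image containing a base point -/
lemma smf_count {V : Type*} [Fintype V] [DecidableEq V] (M d : ℕ) (v0 : V) :
    ((univ : Finset (Fin M → V)).filter fun w =>
      ∃ T : Finset V, T.card ≤ d ∧ ∀ j, w j = v0 ∨ w j ∈ T).card
      ≤ (d + 1) ^ M * Fintype.card V ^ d := by
  classical
  let F : (Fin M → Option (Fin d)) × (Fin d → V) → (Fin M → V) :=
    fun q j => (q.1 j).elim v0 q.2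
  calc _ ≤ ((univ : Finset ((Fin M → Option (Fin d)) × (Fin d → V))).image F).card := by
        apply Finset.card_le_card
        intro w hw
        simp only [mem_filter, mem_univ, true_and] at hw
        obtain ⟨T, hT, hw⟩ := hw
        simp only [mem_image, mem_univ, true_and]
        let e := T.equivFin
        let g : Fin d → V := fun x => if h : x.1 < T.card then (e.symm ⟨x.1, h⟩).1 else v0
        let h : Fin M → Option (Fin d) := fun j =>
          if hj : w j ∈ T then some ⟨(e ⟨w j, hj⟩).1, lt_of_lt_of_le (e ⟨w j, hj⟩).2 hT⟩ else none
        refine ⟨(h, g), ?_⟩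
        funext j
        by_cases hj : w j ∈ T
        · simp [F, h, hj, g]
        · have e1 : h j = none := dif_neg hj
          simp only [F, e1, Option.elim_none]
          exact ((hw j).resolve_right hj).symm
    _ ≤ _ := Finset.card_image_le
    _ = _ := by simp [Finset.card_univ]

/-- user and chip sequences extended to ℕ -/
def smfVert {K N t : ℕ} [NeZero t] (p : (Fin (t + 1) → Fin K) × (Fin t → Fin N)) (j : ℕ) :
    Fin K ⊕ Fin N :=
  if j % 2 = 0 then Sum.inl (p.1 (Fin.ofNat (t + 1) (j / 2))) else Sum.inr (p.2 (Fin.ofNat t (j / 2)))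

def smfEd {K N t : ℕ} [NeZero t] (p : (Fin (t + 1) → Fin K) × (Fin t → Fin N)) (j : ℕ) :
    Fin K × Fin N :=
  (p.1 (Fin.ofNat (t + 1) ((j + 1) / 2)), p.2 (Fin.ofNat t (j / 2)))

def smfW {K N t : ℕ} [NeZero t] (p q : (Fin (t + 1) → Fin K) × (Fin t → Fin N)) (j : ℕ) :
    Fin K ⊕ Fin N :=
  if j < 2 * t then smfVert p j else smfVert q (j - 2 * t)

def smfE {K N t : ℕ} [NeZero t] (p q : (Fin (t + 1) → Fin K) × (Fin t → Fin N)) (j : ℕ) :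
    Fin K × Fin N :=
  if j < 2 * t then smfEd p j else smfEd q (j - 2 * t)

lemma smf_ed_vert {K N t : ℕ} [NeZero t] (p : (Fin (t + 1) → Fin K) × (Fin t → Fin N)) (j : ℕ) :
    s(smfVert p j, smfVert p (j + 1)) = s(Sum.inl (smfEd p j).1, Sum.inr (smfEd p j).2) := by
  rcases Nat.even_or_odd' j with ⟨r, rfl | rfl⟩
  · have h1 : (2 * r) % 2 = 0 := by omega
    have h2 : (2 * r + 1) % 2 ≠ 0 := by omega
    have h3 : (2 * r + 1) / 2 = (2 * r) / 2 := by omega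
    simp only [smfVert, smfEd, if_pos h1, if_neg h2, h3]
  · have h1 : (2 * r + 1 + 1) % 2 = 0 := by omega
    have h2 : (2 * r + 1) % 2 ≠ 0 := by omega
    simp only [smfVert, smfEd, if_pos h1, if_neg h2]
    rw [Sym2.eq_swap]

lemma smf_vert_even {K N t : ℕ} [NeZero t] (p : (Fin (t + 1) → Fin K) × (Fin t → Fin N))
    (r : Fin (t + 1)) : smfVert p (2 * r.1) = Sum.inl (p.1 r) := by
  have h1 : (2 * r.1) % 2 = 0 := by omega
  have h2 : 2 * r.1 / 2 = r.1 := by omega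
  simp only [smfVert, if_pos h1, h2]
  have h3 : Fin.ofNat (t + 1) r.1 = r := by
    ext; simp [Fin.ofNat, Nat.mod_eq_of_lt r.2]
  rw [h3]

lemma smf_vert_odd {K N t : ℕ} [NeZero t] (p : (Fin (t + 1) → Fin K) × (Fin t → Fin N))
    (r : Fin t) : smfVert p (2 * r.1 + 1) = Sum.inr (p.2 r) := by
  have h1 : (2 * r.1 + 1) % 2 ≠ 0 := by omega
  have h2 : (2 * r.1 + 1) / 2 = r.1 := by omega
  simp only [smfVert, if_neg h1, h2]
  have h3 : Fin.ofNat t r.1 = r := by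
    ext; simp [Fin.ofNat, Nat.mod_eq_of_lt r.2]
  rw [h3]

lemma smf_vert_zero {K N t : ℕ} [NeZero t] {i0 : Fin K}
    {p : (Fin (t + 1) → Fin K) × (Fin t → Fin N)} (hp : p ∈ walkSet K N t i0) :
    smfVert p 0 = Sum.inl i0 := by
  have := smf_vert_even p 0
  simp only [walkSet, mem_filter] at hp
  rw [hp.2.1] at this
  simpa using this

lemma smf_vert_last {K N t : ℕ} [NeZero t] {i0 : Fin K}
    {p : (Fin (t + 1) → Fin K) × (Fin t → Fin N)} (hp : p ∈ walkSet K N t i0) :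
    smfVert p (2 * t) = Sum.inl i0 := by
  have := smf_vert_even p (Fin.last t)
  simp only [walkSet, mem_filter] at hp
  rw [hp.2.2.1] at this
  simpa using this

lemma smfW_le {K N t : ℕ} [NeZero t] {i0 : Fin K}
    {p q : (Fin (t + 1) → Fin K) × (Fin t → Fin N)} (hp : p ∈ walkSet K N t i0)
    (hq : q ∈ walkSet K N t i0) {j : ℕ} (hj : j ≤ 2 * t) : smfW p q j = smfVert p j := by
  unfold smfW
  split_ifs with h
  · rfl
  · have : j = 2 * t := by omega
    subst this
    rw [Nat.sub_self, smf_vert_zero hq, smf_vert_last hp]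

lemma smfW_ge {K N t : ℕ} [NeZero t]
    {p q : (Fin (t + 1) → Fin K) × (Fin t → Fin N)} (j : ℕ) :
    smfW p q (2 * t + j) = smfVert q j := by
  unfold smfW
  rw [if_neg (by omega)]
  congr 1; omega

lemma smf_e_w {K N t : ℕ} [NeZero t] {i0 : Fin K}
    {p q : (Fin (t + 1) → Fin K) × (Fin t → Fin N)} (hp : p ∈ walkSet K N t i0)
    (hq : q ∈ walkSet K N t i0) (j : ℕ) :
    s(smfW p q j, smfW p q (j + 1)) = s(Sum.inl (smfE p q j).1, Sum.inr (smfE p q j).2) := by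
  unfold smfE
  split_ifs with h
  · rw [smfW_le hp hq h.le, smfW_le hp hq h, smf_ed_vert]
  · obtain ⟨k, rfl⟩ := Nat.exists_eq_add_of_le (not_lt.1 h)
    rw [add_assoc, smfW_ge, smfW_ge, smf_ed_vert, Nat.add_sub_cancel_left]

lemma smf_vert_nr {K N t : ℕ} [NeZero t] {i0 : Fin K}
    {p : (Fin (t + 1) → Fin K) × (Fin t → Fin N)} (hp : p ∈ walkSet K N t i0)
    (j : ℕ) (hj : j + 2 ≤ 2 * t) : smfVert p j ≠ smfVert p (j + 2) := by
  simp only [walkSet, mem_filter] at hp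
  obtain ⟨-, -, -, h1, h2⟩ := hp
  rcases Nat.even_or_odd' j with ⟨r, rfl | rfl⟩
  · have hr : r < t := by omega
    have e1 := smf_vert_even p (Fin.castSucc ⟨r, hr⟩)
    have e2 := smf_vert_even p (Fin.succ ⟨r, hr⟩)
    simp only [Fin.val_castSucc, Fin.val_succ] at e1 e2
    rw [show 2 * r + 2 = 2 * (r + 1) by ring, e1, e2]
    intro h
    exact h1 _ (Sum.inl.inj h)
  · have hr : r + 1 < t := by omega
    have e1 := smf_vert_odd p ⟨r, by omega⟩
    have e2 := smf_vert_odd p ⟨r + 1, hr⟩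
    simp only at e1 e2
    rw [show 2 * r + 1 + 2 = 2 * (r + 1) + 1 by ring, e1, e2]
    intro h
    exact h2 _ _ rfl (Sum.inr.inj h)

/-- the weight of a walk as a product over edges -/
lemma smf_prod_ed {K N t : ℕ} [NeZero t] (p : (Fin (t + 1) → Fin K) × (Fin t → Fin N))
    (s : Fin K → Fin N → ℝ) :
    ∏ r : Fin t, s (p.1 r.castSucc) (p.2 r) * s (p.1 r.succ) (p.2 r)
      = ∏ j ∈ range (2 * t), s (smfEd p j).1 (smfEd p j).2 := by
  have h2 : ∀ (f : ℕ → ℝ) (n : ℕ),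
      ∏ j ∈ range (2 * n), f j = ∏ r ∈ range n, f (2 * r) * f (2 * r + 1) := by
    intro f n
    induction n with
    | zero => simp
    | succ n ih =>
      rw [show 2 * (n + 1) = 2 * n + 1 + 1 by ring, prod_range_succ, prod_range_succ, ih,
        prod_range_succ, mul_assoc]
  rw [h2, Finset.prod_range]
  apply Finset.prod_congr rfl
  intro r _
  have a1 : (Fin.ofNat t (r : ℕ)) = r := by ext; simp [Fin.ofNat, Nat.mod_eq_of_lt r.2]
  have a2 : (Fin.ofNat (t + 1) (r : ℕ)) = r.castSucc := by
    ext; simp [Fin.ofNat]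
  have a3 : (Fin.ofNat (t + 1) ((r : ℕ) + 1)) = r.succ := by
    ext; simp [Fin.ofNat]
  have b1 : (2 * (r : ℕ)) / 2 = r := by omega
  have b2 : (2 * (r : ℕ) + 1) / 2 = r := by omega
  have b3 : (2 * (r : ℕ) + 1 + 1) / 2 = r + 1 := by omega
  simp only [smfEd, b1, b2, b3, a1, a2, a3]

lemma smf_prod_e {K N t : ℕ} [NeZero t] (p q : (Fin (t + 1) → Fin K) × (Fin t → Fin N))
    (s : Fin K → Fin N → ℝ) :
    (∏ r : Fin t, s (p.1 r.castSucc) (p.2 r) * s (p.1 r.succ) (p.2 r)) *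
    (∏ r : Fin t, s (q.1 r.castSucc) (q.2 r) * s (q.1 r.succ) (q.2 r))
      = ∏ j ∈ range (2 * t + 2 * t), s (smfE p q j).1 (smfE p q j).2 := by
  rw [smf_prod_ed, smf_prod_ed, Finset.prod_range_add]
  congr 1
  · apply Finset.prod_congr rfl
    intro j hj
    simp only [smfE, if_pos (mem_range.1 hj)]
  · apply Finset.prod_congr rfl
    intro j hj
    simp only [smfE, if_neg (show ¬ (2 * t + j < 2 * t) by omega), Nat.add_sub_cancel_left]

/-- the expectation vanishes if an edge occurs exactly once -/
lemma smf_sum_zero {K N : ℕ} (e : ℕ → Fin K × Fin N) (m j0 : ℕ) (hj0 : j0 < m)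
    (h : ∀ j < m, j ≠ j0 → e j ≠ e j0) :
    ∑ s : Fin K → Fin N → Bool, ∏ j ∈ range m, toSign s (e j).1 (e j).2 = 0 := by
  let fl : (Fin K → Fin N → Bool) → (Fin K → Fin N → Bool) :=
    fun s i a => if (i, a) = e j0 then !(s i a) else s i a
  have hfl : Function.Involutive fl := by
    intro s
    funext i a
    simp only [fl]
    split_ifs <;> simp
  have key : ∀ s, ∏ j ∈ range m, toSign (fl s) (e j).1 (e j).2
      = - ∏ j ∈ range m, toSign s (e j).1 (e j).2 := by
    intro s
    rw [← Finset.mul_prod_erase _ _ (mem_range.2 hj0), ← Finset.mul_prod_erase _ _ (mem_range.2 hj0),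
      ← neg_mul]
    congr 1
    · simp only [toSign, fl, Prod.mk.eta, if_true]
      cases s (e j0).1 (e j0).2 <;> simp
    · apply Finset.prod_congr rfl
      intro j hj
      have hj' := Finset.mem_erase.1 hj
      have := h j (mem_range.1 hj'.2) hj'.1
      simp [toSign, fl, this]
  have h1 : ∑ s : Fin K → Fin N → Bool, ∏ j ∈ range m, toSign (fl s) (e j).1 (e j).2
      = ∑ s : Fin K → Fin N → Bool, ∏ j ∈ range m, toSign s (e j).1 (e j).2 :=
    Equiv.sum_comp (hfl.toPerm fl) (fun s => ∏ j ∈ range m, toSign s (e j).1 (e j).2)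
  simp only [key, Finset.sum_neg_distrib] at h1
  linarith

lemma smf_sum_le {K N : ℕ} (e : ℕ → Fin K × Fin N) (m : ℕ) :
    ∑ s : Fin K → Fin N → Bool, ∏ j ∈ range m, toSign s (e j).1 (e j).2 ≤ (2 : ℝ) ^ (K * N) := by
  calc _ ≤ ∑ s : Fin K → Fin N → Bool, (1 : ℝ) := by
        apply Finset.sum_le_sum
        intro s _
        refine (le_abs_self _).trans ?_
        rw [Finset.abs_prod]
        apply le_of_eq
        apply Finset.prod_eq_one
        intro j _
        unfold toSign
        split_ifs <;> simp
    _ = _ := by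
        simp [Finset.card_univ, ← pow_mul, mul_comm]

/-- the pairs that contribute -/
lemma smf_pairs {K N t : ℕ} [NeZero t] (i0 : Fin K) (P : Finset
    (((Fin (t + 1) → Fin K) × (Fin t → Fin N)) × ((Fin (t + 1) → Fin K) × (Fin t → Fin N))))
    (hP : ∀ x ∈ P, x.1 ∈ walkSet K N t i0 ∧ x.2 ∈ walkSet K N t i0 ∧
      ∀ j < 2 * t + 2 * t, ∃ j' < 2 * t + 2 * t, j' ≠ j ∧ smfE x.1 x.2 j' = smfE x.1 x.2 j) :
    P.card ≤ (2 * t) ^ (4 * t + 1) * (K + N) ^ (2 * t - 1) := by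
  classical
  have ht : 0 < t := Nat.pos_of_ne_zero (NeZero.ne t)
  have hc := smf_count (V := Fin K ⊕ Fin N) (4 * t + 1) (2 * t - 1) (Sum.inl i0)
  rw [show 2 * t - 1 + 1 = 2 * t by omega] at hc
  simp only [Fintype.card_sum, Fintype.card_fin] at hc
  refine le_trans ?_ hc
  apply Finset.card_le_card_of_injOn (fun x (j : Fin (4 * t + 1)) => smfW x.1 x.2 j.1)
  · intro x hx
    obtain ⟨hp, hq, h⟩ := hP x hx
    simp only [coe_filter, mem_univ, true_and, Set.mem_ofPred_eq]
    have hw0 : smfW x.1 x.2 0 = Sum.inl i0 := by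
      rw [smfW_le hp hq (by omega), smf_vert_zero hp]
    have hcard := smf_walk_card (smfW x.1 x.2) (2 * t + 2 * t) (2 * t) (by omega) (by omega)
      (by
        intro j hj
        obtain ⟨j', h1, h2, h3⟩ := h j hj
        refine ⟨j', h1, h2, ?_⟩
        rw [smf_e_w hp hq, smf_e_w hp hq, h3])
      (by
        intro j hj
        rw [smfW_le hp hq (by omega), smfW_le hp hq hj]
        exact smf_vert_nr hp j hj)
      (by rw [hw0, smfW_le hp hq le_rfl, smf_vert_last hp])
    refine ⟨((range (2 * t + 2 * t + 1)).image (smfW x.1 x.2)).erase (Sum.inl i0), ?_, ?_⟩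
    · rw [Finset.card_erase_of_mem]
      · omega
      · exact Finset.mem_image.2 ⟨0, by simp, hw0⟩
    · intro j
      by_cases hj : smfW x.1 x.2 j.1 = Sum.inl i0
      · exact Or.inl hj
      · exact Or.inr (Finset.mem_erase.2 ⟨hj, Finset.mem_image.2 ⟨j, by
          have := j.2
          simp only [mem_range]; omega, rfl⟩⟩)
  · intro x hx y hy hxy
    obtain ⟨hp, hq, -⟩ := hP x hx
    obtain ⟨hp', hq', -⟩ := hP y hy
    have hW : ∀ j, j ≤ 4 * t → smfW x.1 x.2 j = smfW y.1 y.2 j := fun j hj =>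
      congrFun hxy (⟨j, by omega⟩ : Fin (4 * t + 1))
    have ext' : ∀ p q : (Fin (t + 1) → Fin K) × (Fin t → Fin N),
        (∀ j ≤ 2 * t, smfVert p j = smfVert q j) → p = q := by
      intro p q hpq
      apply Prod.ext
      · funext r
        have := hpq (2 * r.1) (by omega)
        rw [smf_vert_even, smf_vert_even] at this
        exact Sum.inl.inj this
      · funext r
        have := hpq (2 * r.1 + 1) (by omega)
        rw [smf_vert_odd, smf_vert_odd] at this
        exact Sum.inr.inj this
    apply Prod.ext
    · apply ext'
      intro j hj
      rw [← smfW_le hp hq hj, ← smfW_le hp' hq' hj]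
      exact hW j (by omega)
    · apply ext'
      intro j hj
      have := hW (2 * t + j) (by omega)
      rwa [smfW_ge, smfW_ge] at this

lemma smf_second {K N t : ℕ} (ht : 1 ≤ t) (i0 : Fin K) :
    ∑ s : Fin K → Fin N → Bool, (∑ p ∈ walkSet K N t i0,
      ∏ r : Fin t, toSign s (p.1 r.castSucc) (p.2 r) * toSign s (p.1 r.succ) (p.2 r)) ^ 2
    ≤ ((2 * t) ^ (4 * t + 1) * (K + N) ^ (2 * t - 1) : ℕ) * (2 : ℝ) ^ (K * N) := by
  classical
  have : NeZero t := ⟨by omega⟩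
  simp only [sq, Finset.sum_mul_sum, smf_prod_e]
  simp only [← Finset.sum_product']
  rw [Finset.sum_product, Finset.sum_comm]
  set Q := walkSet K N t i0 ×ˢ walkSet K N t i0
  set good : _ → Prop := fun x : (((Fin (t + 1) → Fin K) × (Fin t → Fin N)) ×
    ((Fin (t + 1) → Fin K) × (Fin t → Fin N))) =>
    ∀ j < 2 * t + 2 * t, ∃ j' < 2 * t + 2 * t, j' ≠ j ∧ smfE x.1 x.2 j' = smfE x.1 x.2 j
    with hgood
  calc _ ≤ ∑ x ∈ Q, if good x then (2 : ℝ) ^ (K * N) else 0 := by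
        apply Finset.sum_le_sum
        intro x _
        by_cases h : good x
        · rw [if_pos h]
          exact smf_sum_le (smfE x.1 x.2) _
        · rw [if_neg h]
          simp only [hgood] at h
          push Not at h
          obtain ⟨j, hj, h⟩ := h
          exact (smf_sum_zero (smfE x.1 x.2) _ j hj h).le
    _ = ((Q.filter good).card : ℝ) * (2 : ℝ) ^ (K * N) := by
        rw [← Finset.sum_filter, Finset.sum_const, nsmul_eq_mul]
    _ ≤ _ := by
        gcongr
        apply smf_pairs i0
        intro x hx
        obtain ⟨h1, h2⟩ := Finset.mem_filter.1 hx
        obtain ⟨h3, h4⟩ := Finset.mem_product.1 h1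
        exact ⟨h3, h4, h2⟩

/-- For fixed t and K = ⌈αN⌉, the second moment of the length-2t
path-sum term δ_i^{(t)} over the i.i.d. uniform ±1 signatures is at most C/N. -/
theorem second_moment_fixed_length_paths (σ α : ℝ) (t : ℕ)
    (hσ : 0 < σ) (hα : 0 < α) (ht : 1 ≤ t)
    (lamStar : ℕ → ℝ)
    (hfix : ∀ N : ℕ, 2 ≤ N →
      1 < lamStar N ∧
      bpVarMap σ ⌈α * (N : ℝ)⌉₊ N (lamStar N) = lamStar N ∧
      (∀ l : ℝ, 0 < l → bpVarMap σ ⌈α * (N : ℝ)⌉₊ N l = l → l = lamStar N)) :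
    ∃ C : ℝ, ∀ N : ℕ, 2 ≤ N → ∀ i : Fin ⌈α * (N : ℝ)⌉₊,
      (∑ s : Fin ⌈α * (N : ℝ)⌉₊ → Fin N → Bool,
          (deltaPath ⌈α * (N : ℝ)⌉₊ N t (lamStar N)
            (lamHatStar σ ⌈α * (N : ℝ)⌉₊ N (lamStar N))
            (1 + 1 / lamHatStar σ ⌈α * (N : ℝ)⌉₊ N (lamStar N))
            (toSign s) i) ^ 2) / 2 ^ (⌈α * (N : ℝ)⌉₊ * N) ≤ C / N := by
  refine ⟨(1 / σ ^ 2) ^ (2 * t) * ((2 * t : ℝ) ^ (4 * t + 1) * (α + 2) ^ (2 * t - 1)), ?_⟩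
  intro N hN
  obtain ⟨hl, -, -⟩ := hfix N hN
  generalize hK : ⌈α * (N : ℝ)⌉₊ = K
  intro i
  set l := lamStar N
  have hN0 : (2 : ℝ) ≤ N := by exact_mod_cast hN
  have hK1 : (1 : ℝ) ≤ K := by exact_mod_cast (show 1 ≤ K by have := i.2; omega)
  have hKle : (K : ℝ) + N ≤ (α + 2) * N := by
    have := Nat.ceil_lt_add_one (show 0 ≤ α * (N : ℝ) by positivity)
    rw [hK] at this
    nlinarith
  set h := lamHatStar σ K N l with hh
  have hσ2 : 0 < σ ^ 2 := by positivity
  have hhσ : σ ^ 2 ≤ h := by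
    have : 0 ≤ (((K : ℝ) - 1) / (N : ℝ)) / l :=
      div_nonneg (div_nonneg (by linarith) (by linarith)) (by linarith)
    rw [hh, lamHatStar]; linarith
  have hh0 : 0 < h := lt_of_lt_of_le hσ2 hhσ
  have hS := smf_second (N := N) ht i
  have hc : ((1 / (1 + 1 / h)) * (-(1 / ((N : ℝ) * l * h))) ^ t) ^ 2
      ≤ (1 / σ ^ 2) ^ (2 * t) * (1 / (N : ℝ) ^ (2 * t)) := by
    rw [mul_pow, ← pow_mul, mul_comm t 2, (even_two_mul t).neg_pow]
    have a1 : (1 / (1 + 1 / h)) ^ 2 ≤ 1 := by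
      apply pow_le_one₀ (by positivity)
      rw [div_le_one (by positivity)]
      have : 0 < 1 / h := by positivity
      linarith
    have a2 : 1 / ((N : ℝ) * l * h) ≤ (1 / σ ^ 2) * (1 / N) := by
      rw [one_div_mul_one_div]
      apply one_div_le_one_div_of_le (by positivity)
      calc σ ^ 2 * N ≤ h * N := by gcongr
        _ = N * 1 * h := by ring
        _ ≤ N * l * h := by gcongr
    have l0 : 0 < l := by linarith
    calc _ ≤ 1 * ((1 / σ ^ 2) * (1 / (N : ℝ))) ^ (2 * t) := by gcongr
      _ = _ := by rw [one_mul, mul_pow, one_div_pow (N : ℝ)]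
  simp only [deltaPath, mul_pow _ (Finset.sum _ _)]
  rw [← Finset.mul_sum, div_le_iff₀ (by positivity)]
  have hNp : (N : ℝ) ^ (2 * t) = (N : ℝ) ^ (2 * t - 1) * N := by
    rw [← pow_succ]; congr 1; omega
  have hNpos : (0 : ℝ) < N := by linarith
  calc _ ≤ ((1 / σ ^ 2) ^ (2 * t) * (1 / (N : ℝ) ^ (2 * t))) *
        (((2 * t) ^ (4 * t + 1) * (K + N) ^ (2 * t - 1) : ℕ) * (2 : ℝ) ^ (K * N)) := by
        apply mul_le_mul hc hS (Finset.sum_nonneg fun _ _ => sq_nonneg _) (by positivity)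
    _ ≤ ((1 / σ ^ 2) ^ (2 * t) * (1 / (N : ℝ) ^ (2 * t))) *
        (((2 * t : ℝ) ^ (4 * t + 1) * ((α + 2) * N) ^ (2 * t - 1)) * (2 : ℝ) ^ (K * N)) := by
        push_cast
        gcongr
    _ = _ := by
        rw [hNp, mul_pow (α + 2)]
        field_simp
end

section
/- Let K, N be positive integers, σ > 0, α = K/N, and let Λ > 0 be the unique positive solution of 1/Λ = σ² + α/(1+Λ). Let S̃ be any real N×K matrix and y ∈ ℝ^N. Suppose G ∈ ℝ^K and Ĝ ∈ ℝ^N satisfy the fixed-point equations G = (Λ/(1+Λ))·G + Λ·S̃ᵀ·Ĝ and Ĝ = (α·Λ/(1+Λ))·Ĝ + y − (1/(1+Λ))·S̃·G. Then G/(1+Λ) = (σ²·I_K + S̃ᵀS̃)⁻¹·S̃ᵀ·y, i.e., the fixed point of the approximate BP iteration yields exactly the MMSE estimate. -/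
open Matrix

/-- If Λ > 0 solves the Tse–Hanly equation with α = K/N and
(G, Ĝ) is a fixed point of the approximate BP iteration, then G/(1+Λ) is exactly the
MMSE estimate (σ²I + S̃ᵀS̃)⁻¹S̃ᵀy. -/
theorem approx_bp_fixed_point_is_mmse (K N : ℕ) (hK : 0 < K) (hN : 0 < N)
    (σ Λ : ℝ) (hσ : 0 < σ) (hΛ : 0 < Λ)
    (hTH : 1 / Λ = σ ^ 2 + ((K : ℝ) / (N : ℝ)) / (1 + Λ))
    (S : Matrix (Fin N) (Fin K) ℝ) (y : Fin N → ℝ)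
    (G : Fin K → ℝ) (Gh : Fin N → ℝ)
    (hG : G = (Λ / (1 + Λ)) • G + Λ • (Sᵀ.mulVec Gh))
    (hGh : Gh = (((K : ℝ) / (N : ℝ)) * Λ / (1 + Λ)) • Gh + y
      - (1 / (1 + Λ)) • (S.mulVec G)) :
    (1 / (1 + Λ)) • G =
      ((σ ^ 2 • (1 : Matrix (Fin K) (Fin K) ℝ) + Sᵀ * S)⁻¹).mulVec (Sᵀ.mulVec y) := by
  have h1 : (1 + Λ) ≠ 0 := by positivity
  have hx : (1 / (1 + Λ)) • G = Λ • (Sᵀ.mulVec Gh) := by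
    ext i
    have := congrFun hG i
    simp only [Pi.add_apply, Pi.smul_apply, smul_eq_mul] at this ⊢
    have e : 1 / (1 + Λ) = 1 - Λ / (1 + Λ) := by field_simp; ring
    rw [e]; linarith
  have hc : 1 - ((K : ℝ) / (N : ℝ)) * Λ / (1 + Λ) = Λ * σ ^ 2 := by
    have e : Λ * (1 / Λ) = 1 := by field_simp
    rw [hTH] at e
    linear_combination -e
  have hy : y = (Λ * σ ^ 2) • Gh + S.mulVec ((1 / (1 + Λ)) • G) := by
    rw [← hc, Matrix.mulVec_smul]
    ext i
    have := congrFun hGh i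
    simp only [Pi.add_apply, Pi.sub_apply, Pi.smul_apply, smul_eq_mul] at this ⊢
    linarith
  have hpd : (σ ^ 2 • (1 : Matrix (Fin K) (Fin K) ℝ) + Sᵀ * S).PosDef := by
    refine Matrix.PosDef.add_posSemidef (Matrix.PosDef.one.smul (by positivity)) ?_
    simpa using Matrix.posSemidef_conjTranspose_mul_self S
  have hu := (Matrix.isUnit_iff_isUnit_det _).mp hpd.isUnit
  have key : (σ ^ 2 • (1 : Matrix (Fin K) (Fin K) ℝ) + Sᵀ * S).mulVec ((1 / (1 + Λ)) • G)
      = Sᵀ.mulVec y := by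
    have e : Sᵀ.mulVec y = σ ^ 2 • ((1 / (1 + Λ)) • G)
        + Sᵀ.mulVec (S.mulVec ((1 / (1 + Λ)) • G)) := by
      conv_lhs => rw [hy]
      rw [Matrix.mulVec_add, Matrix.mulVec_smul]
      congr 1
      rw [hx, smul_smul, mul_comm]
    rw [e, Matrix.add_mulVec, Matrix.smul_mulVec, Matrix.one_mulVec, Matrix.mulVec_mulVec]
  rw [← key, Matrix.mulVec_mulVec, Matrix.nonsing_inv_mul _ hu, Matrix.one_mulVec]
end

section
/- Fix σ > 0, α > 0, and a > 0, and let Λ > 0 be the unique positive solution of 1/Λ = σ² + (K/N)/(1+Λ) with K = ⌈αN⌉; set λ* = 1+Λ and λ̂* = 1/Λ. Define the approximate BP iteration by G^{(0)} = 0 ∈ ℝ^K, Ĝ^{(0)} = y ∈ ℝ^N, and for t ≥ 0: G^{(t+1)}_i = (1/(λ*·λ̂*))·G^{(t)}_i + (1/(λ̂*·√N))·Σ_{b=1}^N s_{ib}·Ĝ^{(t)}_b and Ĝ^{(t+1)}_a = y_a + ((K/N)/(λ*·λ̂*))·Ĝ^{(t)}_a − (1/(λ*·√N))·Σ_{k=1}^K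 s_{ka}·G^{(t+1)}_k. Then there exists C > 0 such that for every N, with probability at least 1 − C·N^{−a} over the i.i.d. uniform ±1 signature entries s_{ia}, for every y ∈ ℝ^N the sequence G^{(t)} converges to a limit G^{(∞)}, and G^{(∞)}/(1+Λ) = (σ²·I_K + S̃ᵀS̃)⁻¹·S̃ᵀ·y, the MMSE estimate. -/
open Matrix

/-- The MMSE estimate x̂(y) = (σ²·I + S̃ᵀS̃)⁻¹ S̃ᵀ y. -/
noncomputable def mmseEstimate {K N : ℕ} (σ : ℝ) (s : Fin K → Fin N → ℝ)
    (y : Fin N → ℝ) : Fin K → ℝ :=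
  ((σ ^ 2 • (1 : Matrix (Fin K) (Fin K) ℝ) + (Stilde s)ᵀ * Stilde s)⁻¹).mulVec
    ((Stilde s)ᵀ.mulVec y)

/-- The approximate BP iteration with variance messages frozen at their fixed-point
values λ*, λ̂*: G^{(0)} = 0, Ĝ^{(0)} = y,
G^{(t+1)}_i = (1/(λ*λ̂*))·G^{(t)}_i + (1/(λ̂*√N))·Σ_b s_{ib}·Ĝ^{(t)}_b, and
Ĝ^{(t+1)}_a = y_a + ((K/N)/(λ*λ̂*))·Ĝ^{(t)}_a − (1/(λ*√N))·Σ_k s_{ka}·G^{(t+1)}_k. -/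
noncomputable def approxBP {K N : ℕ} (lamS lamH : ℝ) (s : Fin K → Fin N → ℝ)
    (y : Fin N → ℝ) : ℕ → (Fin K → ℝ) × (Fin N → ℝ)
  | 0 => (0, y)
  | t + 1 =>
    let prev := approxBP lamS lamH s y t
    let G : Fin K → ℝ := fun i =>
      (1 / (lamS * lamH)) * prev.1 i +
        (1 / (lamH * Real.sqrt N)) * ∑ b : Fin N, s i b * prev.2 b
    let Gh : Fin N → ℝ := fun a =>
      y a + (((K : ℝ) / (N : ℝ)) / (lamS * lamH)) * prev.2 a -
        (1 / (lamS * Real.sqrt N)) * ∑ k : Fin K, s k a * G k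
    (G, Gh)



set_option linter.unusedSectionVars false
set_option linter.unusedSimpArgs false
namespace BPaux
open MvPolynomial

section poly
variable {ι κ : Type} [Fintype ι] [Fintype κ] [DecidableEq ι] [DecidableEq κ]

abbrev Rg (ι κ : Type) := MvPolynomial (ι × κ) ℕ

noncomputable def Y (ι κ : Type) : Matrix ι κ (Rg ι κ) := Matrix.of fun i a => X (i, a)

noncomputable def M (ι κ : Type) [Fintype κ] : Matrix ι ι (Rg ι κ) := Y ι κ * (Y ι κ)ᵀ

noncomputable def T (ι κ : Type) [Fintype ι] [Fintype κ] [DecidableEq ι] (k : ℕ) : Rg ι κ :=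
  ((M ι κ) ^ k).trace

lemma pd_X (i p : ι) (a b : κ) : pderiv (i, a) (X (p, b) : Rg ι κ)
    = (if p = i then 1 else 0) * (if b = a then 1 else 0) := by
  rw [pderiv_X]
  by_cases h1 : p = i <;> by_cases h2 : b = a <;> simp [Pi.single_apply, h1, h2]

lemma pd_M (i p r : ι) (a : κ) : pderiv (i, a) (M ι κ p r)
    = (if p = i then 1 else 0) * Y ι κ r a + Y ι κ p a * (if r = i then 1 else 0) := by
  simp only [M, Matrix.mul_apply, Matrix.transpose_apply, map_sum, Derivation.leibniz, Y,
    Matrix.of_apply, pd_X, smul_eq_mul, Finset.sum_add_distrib]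
  have e1 : ∀ x : κ, (X (p, x) * ((if r = i then 1 else 0) * if x = a then 1 else 0) : Rg ι κ)
     = if x = a then X (p, x) * (if r = i then 1 else 0) else 0 := by
    intro x; split_ifs <;> simp
  have e2 : ∀ x : κ, (X (r, x) * ((if p = i then 1 else 0) * if x = a then 1 else 0) : Rg ι κ)
     = if x = a then X (r, x) * (if p = i then 1 else 0) else 0 := by
    intro x; split_ifs <;> simp
  simp only [e1, e2, Finset.sum_ite_eq', Finset.mem_univ, if_true]
  ring

lemma pd_Mpow (i : ι) (a : κ) (k : ℕ) : ∀ p q : ι, pderiv (i, a) ((M ι κ ^ k) p q)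
    = ∑ j ∈ Finset.range k, ((M ι κ ^ j) p i * ((Y ι κ)ᵀ * M ι κ ^ (k - 1 - j)) a q
        + (M ι κ ^ j * Y ι κ) p a * (M ι κ ^ (k - 1 - j)) i q) := by
  induction k with
  | zero => intro p q; simp only [pow_zero, Matrix.one_apply]; split_ifs <;> simp
  | succ k ih =>
    intro p q
    rw [pow_succ', Matrix.mul_apply, map_sum]
    simp only [Derivation.leibniz, smul_eq_mul, ih, pd_M, Finset.sum_add_distrib (s := Finset.univ)]
    rw [Finset.sum_range_succ']
    congr 1
    · have h0 : ∀ j ∈ Finset.range k, k + 1 - 1 - (j + 1) = k - 1 - j := by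
        intro j hj; omega
      simp only [Finset.mul_sum]
      rw [Finset.sum_comm]
      refine Finset.sum_congr rfl fun j hj => ?_
      rw [h0 j hj, pow_succ', Matrix.mul_assoc (M ι κ), Matrix.mul_apply (M := M ι κ),
        Matrix.mul_apply (M := M ι κ), Finset.sum_mul, Finset.sum_mul, ← Finset.sum_add_distrib]
      refine Finset.sum_congr rfl fun r _ => ?_
      ring
    · simp only [pow_zero, Matrix.one_mul, Matrix.one_apply, Matrix.mul_apply,
        Matrix.transpose_apply, mul_add, Finset.sum_add_distrib]
      congr 1
      · split_ifs with h
        · simp [mul_comm]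
        · simp
      · simp [mul_comm]

lemma M_pow_transpose (k : ℕ) : (M ι κ ^ k)ᵀ = M ι κ ^ k := by
  rw [Matrix.transpose_pow]; congr 1; simp [M, Matrix.transpose_mul]

lemma YM_comm (k : ℕ) (i : ι) (a : κ) :
    ((Y ι κ)ᵀ * M ι κ ^ k) a i = (M ι κ ^ k * Y ι κ) i a := by
  rw [← Matrix.transpose_apply (M ι κ ^ k * Y ι κ), Matrix.transpose_mul, M_pow_transpose]

lemma pd_T (i : ι) (a : κ) (k : ℕ) : pderiv (i, a) (T ι κ k)
    = 2 * k * (M ι κ ^ (k - 1) * Y ι κ) i a := by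
  rw [T, Matrix.trace, map_sum]
  simp only [Matrix.diag_apply, pd_Mpow]
  rw [Finset.sum_comm]
  have : ∀ j ∈ Finset.range k, ∑ x, ((M ι κ ^ j) x i * ((Y ι κ)ᵀ * M ι κ ^ (k - 1 - j)) a x
        + (M ι κ ^ j * Y ι κ) x a * (M ι κ ^ (k - 1 - j)) i x)
      = 2 * (M ι κ ^ (k - 1) * Y ι κ) i a := by
    intro j hj
    have hj' : k - 1 - j + j = k - 1 := by have := Finset.mem_range.1 hj; omega
    rw [Finset.sum_add_distrib, two_mul]
    congr 1
    · have : ∑ x, (M ι κ ^ j) x i * ((Y ι κ)ᵀ * M ι κ ^ (k - 1 - j)) a x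
        = ((Y ι κ)ᵀ * M ι κ ^ (k - 1)) a i := by
        have e : ((Y ι κ)ᵀ * M ι κ ^ (k - 1)) = ((Y ι κ)ᵀ * M ι κ ^ (k - 1 - j)) * M ι κ ^ j := by
          rw [Matrix.mul_assoc, ← pow_add, hj']
        rw [e, Matrix.mul_apply (N := M ι κ ^ j)]
        exact Finset.sum_congr rfl fun x _ => mul_comm _ _
      rw [this, YM_comm]
    · have : (M ι κ ^ (k - 1) * Y ι κ) = M ι κ ^ (k - 1 - j) * (M ι κ ^ j * Y ι κ) := by
        rw [← Matrix.mul_assoc, ← pow_add, hj']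
      rw [this, Matrix.mul_apply (M := M ι κ ^ (k - 1 - j))]
      exact Finset.sum_congr rfl fun x _ => mul_comm _ _
  rw [Finset.sum_congr rfl this]
  simp; ring

/-- the vector field -/
noncomputable def B (ι κ : Type) [Fintype ι] [Fintype κ] [DecidableEq ι] (k : ℕ) (i : ι) (a : κ) :
    Rg ι κ := ((Y ι κ)ᵀ * M ι κ ^ k) a i

lemma T_succ (k : ℕ) : T ι κ (k + 1) = ∑ i, ∑ a, X (i, a) * B ι κ k i a := by
  rw [T, pow_succ', M, Matrix.mul_assoc, Matrix.trace]
  simp only [Matrix.diag_apply]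
  refine Finset.sum_congr rfl fun i _ => ?_
  rw [Matrix.mul_apply]
  rfl

lemma B_T (k m : ℕ) : ∑ i, ∑ a, B ι κ k i a * pderiv (i, a) (T ι κ m) = 2 * m * T ι κ (m + k) := by
  rcases m with _ | m
  · simp [pd_T]
  simp only [pd_T, add_tsub_cancel_right]
  rw [T, show m + 1 + k = m + (1 + k) by ring, pow_add, pow_add, pow_one]
  conv_rhs => rw [M, Matrix.mul_assoc, ← Matrix.mul_assoc, Matrix.trace, Finset.mul_sum]
  refine Finset.sum_congr rfl fun i _ => ?_
  rw [Matrix.diag_apply, Matrix.mul_apply, Finset.mul_sum]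
  refine Finset.sum_congr rfl fun a _ => ?_
  rw [B, M]; ring

lemma div_B (k : ℕ) : ∑ i, ∑ a, pderiv (i, a) (B ι κ k i a)
    = (Fintype.card κ + k : ℕ) * T ι κ k
      + ∑ j ∈ Finset.range k, T ι κ (j + 1) * T ι κ (k - 1 - j) := by
  have h1 : ∀ i a, pderiv (i, a) (B ι κ k i a) = (M ι κ ^ k) i i +
      ∑ j ∈ Finset.range k, ((M ι κ ^ j * Y ι κ) i a * ((Y ι κ)ᵀ * M ι κ ^ (k - 1 - j)) a i
        + ((Y ι κ)ᵀ * (M ι κ ^ j * Y ι κ)) a a * (M ι κ ^ (k - 1 - j)) i i) := by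
    intro i a
    rw [B, Matrix.mul_apply, map_sum]
    simp only [Derivation.leibniz, smul_eq_mul, Matrix.transpose_apply, Finset.sum_add_distrib (s := Finset.univ)]
    rw [add_comm]
    congr 1
    · simp only [Y, Matrix.of_apply, pd_X]
      simp
    · simp only [pd_Mpow, Finset.mul_sum]
      rw [Finset.sum_comm]
      refine Finset.sum_congr rfl fun j _ => ?_
      have e1 : (M ι κ ^ j * Y ι κ) i a = ∑ x, Y ι κ x a * (M ι κ ^ j) x i := by
        rw [← Matrix.transpose_apply (M ι κ ^ j * Y ι κ), Matrix.transpose_mul, M_pow_transpose,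
          Matrix.mul_apply]
        rfl
      have e2 : ((Y ι κ)ᵀ * (M ι κ ^ j * Y ι κ)) a a
          = ∑ x, Y ι κ x a * (M ι κ ^ j * Y ι κ) x a := by
        rw [Matrix.mul_apply]; rfl
      rw [e1, e2, Finset.sum_mul, Finset.sum_mul, ← Finset.sum_add_distrib]
      refine Finset.sum_congr rfl fun x _ => ?_
      ring
  simp only [h1, Finset.sum_add_distrib (s := Finset.univ)]
  have h2 : ∑ i : ι, ∑ a : κ, (M ι κ ^ k) i i = Fintype.card κ * T ι κ k := by
    simp [T, Matrix.trace, Finset.mul_sum]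
  have h3 : ∀ j ∈ Finset.range k, ∑ i : ι, ∑ a : κ,
      ((M ι κ ^ j * Y ι κ) i a * ((Y ι κ)ᵀ * M ι κ ^ (k - 1 - j)) a i
        + ((Y ι κ)ᵀ * (M ι κ ^ j * Y ι κ)) a a * (M ι κ ^ (k - 1 - j)) i i)
      = T ι κ k + T ι κ (j + 1) * T ι κ (k - 1 - j) := by
    intro j hj
    have hj' : j + (1 + (k - 1 - j)) = k := by have := Finset.mem_range.1 hj; omega
    simp only [Finset.sum_add_distrib]
    congr 1
    · simp only [← Matrix.mul_apply]
      conv_rhs => rw [T, ← hj', pow_add, pow_add, pow_one]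
      conv_rhs => rw [M]
      rw [Matrix.trace]
      refine Finset.sum_congr rfl fun i _ => ?_
      rw [Matrix.diag_apply]
      simp only [Matrix.mul_assoc, M]
    · simp only [← Finset.sum_mul, ← Finset.mul_sum]
      have : T ι κ (j + 1) = ∑ a, ((Y ι κ)ᵀ * (M ι κ ^ j * Y ι κ)) a a := by
        rw [T, pow_succ]
        conv_lhs => rw [M]
        rw [← Matrix.mul_assoc, Matrix.trace_mul_comm]
        rfl
      rw [this]; rfl
  have h4 : ∑ i : ι, ∑ a : κ, ∑ j ∈ Finset.range k,
      ((M ι κ ^ j * Y ι κ) i a * ((Y ι κ)ᵀ * M ι κ ^ (k - 1 - j)) a i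
        + ((Y ι κ)ᵀ * (M ι κ ^ j * Y ι κ)) a a * (M ι κ ^ (k - 1 - j)) i i)
      = k * T ι κ k + ∑ j ∈ Finset.range k, T ι κ (j + 1) * T ι κ (k - 1 - j) := by
    have : ∀ i : ι, ∑ a : κ, ∑ j ∈ Finset.range k,
      ((M ι κ ^ j * Y ι κ) i a * ((Y ι κ)ᵀ * M ι κ ^ (k - 1 - j)) a i
        + ((Y ι κ)ᵀ * (M ι κ ^ j * Y ι κ)) a a * (M ι κ ^ (k - 1 - j)) i i)
      = ∑ j ∈ Finset.range k, ∑ a : κ, 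
      ((M ι κ ^ j * Y ι κ) i a * ((Y ι κ)ᵀ * M ι κ ^ (k - 1 - j)) a i
        + ((Y ι κ)ᵀ * (M ι κ ^ j * Y ι κ)) a a * (M ι κ ^ (k - 1 - j)) i i) :=
      fun i => Finset.sum_comm
    simp only [this]
    rw [Finset.sum_comm, Finset.sum_congr rfl h3, Finset.sum_add_distrib]
    simp
  rw [h2, h4]
  push_cast
  ring

end poly
end BPaux

namespace BPaux
open MvPolynomial

lemma sq_sgn (b : Bool) : ((if b then 1 else -1 : ℝ)) * (if b then 1 else -1 : ℝ) = 1 := by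
  cases b <;> norm_num

noncomputable def Ev {K N : ℕ} (s : Fin K → Fin N → Bool) : Rg (Fin K) (Fin N) →+* ℝ :=
  MvPolynomial.eval₂Hom (Nat.castRingHom ℝ) (fun p => toSign s p.1 p.2)

noncomputable def EE (K N : ℕ) : Rg (Fin K) (Fin N) →+ ℝ :=
  ∑ s : Fin K → Fin N → Bool, (Ev s).toAddMonoidHom

lemma EE_apply {K N : ℕ} (f : Rg (Fin K) (Fin N)) :
    EE K N f = ∑ s : Fin K → Fin N → Bool, Ev s f := by
  simp [EE]

lemma EE_monomial {K N : ℕ} (d : Fin K × Fin N →₀ ℕ) (c : ℕ) :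
    EE K N (monomial d c) = c * ∏ e, (1 + (-1 : ℝ) ^ d e) := by
  rw [EE_apply]
  have h1 : ∀ s : Fin K → Fin N → Bool, Ev s (monomial d c)
      = c * ∏ e : Fin K × Fin N, (if Function.uncurry s e then 1 else -1 : ℝ) ^ d e := by
    intro s
    simp only [Ev, coe_eval₂Hom, eval₂_monomial]
    rw [Finsupp.prod_fintype _ _ (by simp)]
    simp only [toSign, Function.uncurry]
    rfl
  simp only [h1]
  rw [← Finset.mul_sum]
  congr 1
  rw [← (Equiv.curry (Fin K) (Fin N) Bool).sum_comp]
  have h2 : ∀ s : Fin K × Fin N → Bool,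
      Function.uncurry ((Equiv.curry (Fin K) (Fin N) Bool) s) = s := by
    intro s; ext ⟨a, b⟩; rfl
  simp only [h2]
  have := Finset.prod_univ_sum (fun _ : Fin K × Fin N => (Finset.univ : Finset Bool))
    (fun e b => (if b then 1 else -1 : ℝ) ^ d e)
  rw [Fintype.piFinset_univ] at this
  rw [← this]
  refine Finset.prod_congr rfl fun e _ => ?_
  simp

lemma fac_nonneg (m : ℕ) : 0 ≤ 1 + (-1 : ℝ) ^ m := by
  rcases neg_one_pow_eq_or ℝ m with h | h <;> rw [h] <;> norm_num

lemma EE_monomial_nonneg {K N : ℕ} (d : Fin K × Fin N →₀ ℕ) (c : ℕ) :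
    0 ≤ EE K N (monomial d c) := by
  rw [EE_monomial]
  exact mul_nonneg (Nat.cast_nonneg _) (Finset.prod_nonneg fun e _ => fac_nonneg _)

lemma stein {K N : ℕ} (e : Fin K × Fin N) (f : Rg (Fin K) (Fin N)) :
    EE K N (X e * f) ≤ EE K N (pderiv e f) := by
  induction f using MvPolynomial.induction_on' with
  | add p q hp hq => rw [mul_add, map_add, map_add, map_add]; exact add_le_add hp hq
  | monomial d c =>
    rw [pderiv_monomial, X, monomial_mul, one_mul, EE_monomial, EE_monomial]
    rcases Nat.eq_zero_or_pos (d e) with h0 | h0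
    · have hz : ∏ e', (1 + (-1 : ℝ) ^ (Finsupp.single e 1 + d : Fin K × Fin N →₀ ℕ) e') = 0 := by
        apply Finset.prod_eq_zero (Finset.mem_univ e)
        simp [h0]
      rw [hz, mul_zero]
      exact mul_nonneg (Nat.cast_nonneg _) (Finset.prod_nonneg fun e _ => fac_nonneg _)
    · have hz : ∏ e', (1 + (-1 : ℝ) ^ (Finsupp.single e 1 + d : Fin K × Fin N →₀ ℕ) e')
          = ∏ e', (1 + (-1 : ℝ) ^ (d - Finsupp.single e 1 : Fin K × Fin N →₀ ℕ) e') := by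
        refine Finset.prod_congr rfl fun e' _ => ?_
        by_cases h : e = e'
        · subst h
          obtain ⟨m, hm⟩ : ∃ m, d e = m + 1 := ⟨d e - 1, by omega⟩
          simp only [Finsupp.add_apply, Finsupp.tsub_apply, Finsupp.single_eq_same, hm]
          rw [add_tsub_cancel_right, show 1 + (m + 1) = m + 2 by ring, pow_add]
          norm_num
        · simp [Finsupp.single_apply, h]
      rw [hz]
      refine mul_le_mul_of_nonneg_right ?_ (Finset.prod_nonneg fun e _ => fac_nonneg _)
      exact_mod_cast Nat.le_mul_of_pos_right c h0

noncomputable abbrev TT (K N k : ℕ) : Rg (Fin K) (Fin N) := T (Fin K) (Fin N) k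

noncomputable def der (K N k : ℕ) : List ℕ → Rg (Fin K) (Fin N)
  | [] => 0
  | m :: L => 2 * m * TT K N (m + k) * (L.map (TT K N)).prod + TT K N m * der K N k L

lemma B_list (K N k : ℕ) (L : List ℕ) :
    ∑ i, ∑ a, B (Fin K) (Fin N) k i a * pderiv (i, a) (L.map (TT K N)).prod = der K N k L := by
  induction L with
  | nil => simp [der]
  | cons m L ih =>
    simp only [List.map_cons, List.prod_cons, pderiv_mul, der, ← ih, ← B_T, Finset.mul_sum,
      Finset.sum_mul, ← Finset.sum_add_distrib]
    refine Finset.sum_congr rfl fun i _ => Finset.sum_congr rfl fun a _ => ?_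
    ring

noncomputable def phi (K N : ℕ) (L : List ℕ) : ℝ := EE K N (L.map (TT K N)).prod

lemma phi_zero (K N : ℕ) (L : List ℕ) : phi K N (0 :: L) = K * phi K N L := by
  simp only [phi, List.map_cons, List.prod_cons]
  have : TT K N 0 = (K : Rg (Fin K) (Fin N)) := by simp [TT, T]
  rw [this, ← nsmul_eq_mul, map_nsmul, nsmul_eq_mul]

lemma phi_rec (K N k : ℕ) (L : List ℕ) : phi K N ((k + 1) :: L)
    ≤ (N + k) * phi K N (k :: L)
      + ∑ j ∈ Finset.range k, phi K N ((j + 1) :: (k - 1 - j) :: L)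
      + EE K N (der K N k L) := by
  have h1 : phi K N ((k + 1) :: L) ≤ EE K N (∑ i, ∑ a,
      pderiv (i, a) (B (Fin K) (Fin N) k i a * (L.map (TT K N)).prod)) := by
    simp only [phi, List.map_cons, List.prod_cons, TT]
    rw [T_succ, Finset.sum_mul, map_sum, map_sum]
    refine Finset.sum_le_sum fun i _ => ?_
    rw [Finset.sum_mul, map_sum, map_sum]
    refine Finset.sum_le_sum fun a _ => ?_
    rw [mul_assoc]
    exact stein _ _
  refine h1.trans (le_of_eq ?_)
  simp only [pderiv_mul, Finset.sum_add_distrib]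
  rw [B_list, map_add]
  congr 1
  simp only [← Finset.sum_mul]
  rw [div_B, add_mul, map_add, mul_assoc, ← nsmul_eq_mul, map_nsmul, nsmul_eq_mul,
    Finset.sum_mul, map_sum]
  simp [phi, mul_assoc]

lemma der_bound (K N n k : ℕ) (b : ℕ → ℝ) (c D : ℝ) (hc : 0 ≤ c) (hb : ∀ k, 0 ≤ b k) (hD0 : 0 ≤ D)
    (S : ℕ) (IH : ∀ L : List ℕ, L.sum ≤ S → phi K N L ≤ c * (L.map b).prod)
    (hD : ∀ m k, m + k ≤ n → b (m + k) ≤ D * (b m * b k)) (hS : S ≤ n) :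
    ∀ L Q : List ℕ, k + L.sum + Q.sum ≤ S →
     EE K N ((Q.map (TT K N)).prod * der K N k L)
      ≤ 2 * L.sum * D * b k * (c * (Q.map b).prod * (L.map b).prod) := by
  intro L
  induction L with
  | nil => intro Q _; simp [der]
  | cons m L ih =>
    intro Q hQ
    rw [List.sum_cons] at hQ
    have h1 := ih (m :: Q) (by rw [List.sum_cons]; omega)
    have h2 := IH ((m + k) :: (Q ++ L)) (by simp; omega)
    have h3 := hD m k (by omega)
    have e : EE K N ((Q.map (TT K N)).prod * der K N k (m :: L))
        = 2 * m * phi K N ((m + k) :: (Q ++ L))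
          + EE K N (((m :: Q).map (TT K N)).prod * der K N k L) := by
      have : (Q.map (TT K N)).prod * der K N k (m :: L)
         = (2 * m) • ((((m + k) :: (Q ++ L)).map (TT K N)).prod)
           + ((m :: Q).map (TT K N)).prod * der K N k L := by
        simp only [der, List.map_cons, List.prod_cons, List.map_append, List.prod_append,
          nsmul_eq_mul]
        push_cast
        ring
      rw [this, map_add, map_nsmul, phi, nsmul_eq_mul]
      push_cast
      ring
    rw [e]
    simp only [List.map_cons, List.prod_cons, List.map_append, List.prod_append, List.sum_cons] at h1 h2 ⊢
    have hq : 0 ≤ (Q.map b).prod := List.prod_nonneg (by simp; intro a _; exact hb a)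
    have hl : 0 ≤ (L.map b).prod := List.prod_nonneg (by simp; intro a _; exact hb a)
    have h4 : phi K N ((m + k) :: (Q ++ L))
       ≤ c * (D * (b m * b k) * ((Q.map b).prod * (L.map b).prod)) := by
      refine h2.trans ?_
      gcongr
    rw [Nat.cast_add]
    nlinarith [mul_le_mul_of_nonneg_left h4 (show (0:ℝ) ≤ 2 * m by positivity)]

lemma main_bound (K N n : ℕ) (b : ℕ → ℝ) (D : ℝ) (hb : ∀ k, 0 ≤ b k) (hD0 : 0 ≤ D) (hb0 : b 0 = K)
    (hD : ∀ m k, m + k ≤ n → b (m + k) ≤ D * (b m * b k))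
    (hrec : ∀ k, k < n → (N + n + 2 * n * D) * b k
      + ∑ j ∈ Finset.range k, b (j + 1) * b (k - 1 - j) ≤ b (k + 1)) :
    ∀ S, S ≤ n → ∀ L : List ℕ, L.sum ≤ S → phi K N L ≤ phi K N [] * (L.map b).prod := by
  have hc : 0 ≤ phi K N [] := by
    simp only [phi, List.map_nil, List.prod_nil]
    exact EE_monomial_nonneg 0 1
  intro S
  induction S with
  | zero =>
    intro _ L
    induction L with
    | nil => intro _; simp
    | cons m L ih =>
      intro h
      rw [List.sum_cons] at h
      obtain rfl : m = 0 := by omega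
      rw [phi_zero, List.map_cons, List.prod_cons, hb0]
      have := ih (by omega)
      have hK : (0:ℝ) ≤ K := Nat.cast_nonneg K
      nlinarith [mul_le_mul_of_nonneg_left this hK]
  | succ S IH =>
    intro hS L
    induction L with
    | nil => intro _; simp
    | cons m L ih =>
      intro h
      rw [List.sum_cons] at h
      rcases m with _ | k
      · rw [phi_zero, List.map_cons, List.prod_cons, hb0]
        have := ih (by omega)
        have hK : (0:ℝ) ≤ K := Nat.cast_nonneg K
        nlinarith [mul_le_mul_of_nonneg_left this hK]
      · have IH' := IH (by omega)
        set c := phi K N [] with hcdef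
        have hl : 0 ≤ (L.map b).prod := List.prod_nonneg (by simp; intro a _; exact hb a)
        have h1 := der_bound K N n k b c D hc hb hD0 S IH' hD (by omega) L [] (by simp; omega)
        simp only [List.map_nil, List.prod_nil, one_mul, mul_one] at h1
        have h2 := IH' (k :: L) (by simp; omega)
        have h3 : ∑ j ∈ Finset.range k, phi K N ((j + 1) :: (k - 1 - j) :: L)
            ≤ ∑ j ∈ Finset.range k, (b (j + 1) * b (k - 1 - j)) * (c * (L.map b).prod) := by
          refine Finset.sum_le_sum fun j hj => ?_
          have := Finset.mem_range.1 hj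
          refine (IH' _ (by simp; omega)).trans (le_of_eq ?_)
          simp; ring
        rw [← Finset.sum_mul] at h3
        have h4 := hrec k (by omega)
        refine (phi_rec K N k L).trans ?_
        simp only [List.map_cons, List.prod_cons] at h2 ⊢
        have hcl : 0 ≤ c * (L.map b).prod := mul_nonneg hc hl
        have h5 := mul_le_mul_of_nonneg_right h4 hcl
        have h6 := mul_le_mul_of_nonneg_left h2 (show (0:ℝ) ≤ N + k by positivity)
        have hk : (k:ℝ) ≤ n := by exact_mod_cast (by omega : k ≤ n)
        have hs : (L.sum:ℝ) ≤ n := by exact_mod_cast (by omega : L.sum ≤ n)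
        have h7 : (k:ℝ) * (b k * (c * (L.map b).prod)) ≤ n * (b k * (c * (L.map b).prod)) :=
          mul_le_mul_of_nonneg_right hk (mul_nonneg (hb k) hcl)
        have h8 : (L.sum:ℝ) * (2 * D * b k * (c * (L.map b).prod))
            ≤ n * (2 * D * b k * (c * (L.map b).prod)) :=
          mul_le_mul_of_nonneg_right hs (by have := hb k; positivity)
        linarith

end BPaux

namespace BPaux
open MvPolynomial

noncomputable def ws (e p r : ℝ) : ℕ → ℝ
  | 0 => 1
  | k + 1 => e + p * ws e p r k + r * ∑ j : Fin k, ws e p r (j + 1) * ws e p r (k - 1 - j)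
  decreasing_by all_goals omega

lemma ws_zero (e p r : ℝ) : ws e p r 0 = 1 := by rw [ws]

lemma ws_succ (e p r : ℝ) (k : ℕ) : ws e p r (k + 1)
    = e + p * ws e p r k + r * ∑ j ∈ Finset.range k, ws e p r (j + 1) * ws e p r (k - 1 - j) := by
  rw [ws, Finset.sum_range]

lemma conv_sum (f g : ℕ → ℝ) (m : ℕ) :
    ∑ k ∈ Finset.range (m + 1), ∑ j ∈ Finset.range k, f j * g (k - 1 - j)
      = ∑ j ∈ Finset.range m, f j * ∑ l ∈ Finset.range (m - j), g l := by
  induction m with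
  | zero => simp
  | succ m ih =>
    rw [Finset.sum_range_succ, ih]
    have h : ∀ j ∈ Finset.range (m + 1), f j * ∑ l ∈ Finset.range (m + 1 - j), g l
        = f j * ∑ l ∈ Finset.range (m - j), g l + f j * g (m + 1 - 1 - j) := by
      intro j hj
      have := Finset.mem_range.1 hj
      rw [show m + 1 - j = (m - j) + 1 by omega, Finset.sum_range_succ,
        show m + 1 - 1 - j = m - j by omega, mul_add]
    rw [Finset.sum_congr rfl h, Finset.sum_add_distrib, Finset.sum_range_succ (fun j => f j * ∑ l ∈ Finset.range (m - j), g l)]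
    simp

lemma ws_nonneg {e p r : ℝ} (he : 0 ≤ e) (hp : 0 ≤ p) (hr : 0 ≤ r) (k : ℕ) : 0 ≤ ws e p r k := by
  induction k using Nat.strong_induction_on with
  | _ k ih =>
    rcases k with _ | k
    · rw [ws_zero]; norm_num
    · rw [ws_succ]
      have h1 := ih k (by omega)
      have h2 : 0 ≤ ∑ j ∈ Finset.range k, ws e p r (j + 1) * ws e p r (k - 1 - j) :=
        Finset.sum_nonneg fun j hj => by
          have := Finset.mem_range.1 hj
          exact mul_nonneg (ih _ (by omega)) (ih _ (by omega))
      positivity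

lemma ws_ge {e p r : ℝ} (he : 0 ≤ e) (he1 : e ≤ 1) (hp : 0 ≤ p) (hr : 0 ≤ r) (k : ℕ) :
    e ≤ ws e p r k := by
  rcases k with _ | k
  · rw [ws_zero]; exact he1
  · rw [ws_succ]
    have h1 := ws_nonneg he hp hr
    have h2 : 0 ≤ ∑ j ∈ Finset.range k, ws e p r (j + 1) * ws e p r (k - 1 - j) :=
      Finset.sum_nonneg fun j hj => mul_nonneg (h1 _) (h1 _)
    have := mul_nonneg hp (h1 k)
    have := mul_nonneg hr h2
    linarith

lemma ws_sum {e p r P : ℝ} {n : ℕ} (he : 0 ≤ e) (hp : 0 ≤ p) (hr : 0 ≤ r) (hP : 0 ≤ P)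
    (h : n * e + p * (1 + P) + r * (P * (1 + P)) ≤ P) :
    ∀ m, m ≤ n → ∑ k ∈ Finset.range m, ws e p r (k + 1) ≤ P := by
  intro m
  have h1 := ws_nonneg he hp hr
  induction m with
  | zero => intro _; simpa using hP
  | succ m ih =>
    intro hm
    have ih' := ih (by omega)
    rw [Finset.sum_congr rfl fun k _ => ws_succ e p r k]
    simp only [Finset.sum_add_distrib, ← Finset.mul_sum]
    have hz : ∑ k ∈ Finset.range (m + 1), ws e p r k ≤ 1 + P := by
      rw [Finset.sum_range_succ', ws_zero]; linarith
    have hd : ∑ k ∈ Finset.range (m + 1), ∑ j ∈ Finset.range k,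
        ws e p r (j + 1) * ws e p r (k - 1 - j) ≤ P * (1 + P) := by
      rw [conv_sum (fun j => ws e p r (j + 1))]
      calc _ ≤ ∑ j ∈ Finset.range m, ws e p r (j + 1) * (1 + P) := by
            refine Finset.sum_le_sum fun j _ => mul_le_mul_of_nonneg_left ?_ (h1 _)
            refine le_trans ?_ hz
            exact Finset.sum_le_sum_of_subset_of_nonneg
              (Finset.range_mono (by omega)) (fun i _ _ => h1 i)
        _ = (∑ j ∈ Finset.range m, ws e p r (j + 1)) * (1 + P) := by rw [Finset.sum_mul]
        _ ≤ _ := mul_le_mul_of_nonneg_right ih' (by linarith)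
    have hm' : ((m + 1 : ℕ) : ℝ) ≤ n := by exact_mod_cast hm
    have a1 := mul_le_mul_of_nonneg_right hm' he
    have a2 := mul_le_mul_of_nonneg_left hz hp
    have a3 := mul_le_mul_of_nonneg_left hd hr
    simp only [Finset.sum_const, Finset.card_range, nsmul_eq_mul]
    linarith

lemma ws_le {e p r P : ℝ} {n : ℕ} (he : 0 ≤ e) (hp : 0 ≤ p) (hr : 0 ≤ r) (hP : 0 ≤ P)
    (h : n * e + p * (1 + P) + r * (P * (1 + P)) ≤ P) (k : ℕ) (hk : k ≤ n) :
    ws e p r k ≤ 1 + P := by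
  have h1 := ws_nonneg he hp hr
  rcases k with _ | k
  · rw [ws_zero]; linarith
  · have := ws_sum he hp hr hP h (k + 1) hk
    rw [Finset.sum_range_succ] at this
    have h2 : 0 ≤ ∑ x ∈ Finset.range k, ws e p r (x + 1) := Finset.sum_nonneg fun j _ => h1 _
    linarith

lemma moment_bound (K N n : ℕ) (hK : 1 ≤ K) (hN : 1 ≤ N) (R e P ε : ℝ) (hR : 0 < R)
    (he : 0 < e) (he1 : e ≤ 1) (hP : 0 ≤ P) (hε : 0 ≤ ε)
    (h : n * e + (1 + ε) / R * (1 + P) + (K / N : ℝ) / R * (P * (1 + P)) ≤ P)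
    (hn : n + 2 * n * ((1 + P) / (K * e ^ 2)) ≤ ε * N) :
    phi K N [n] ≤ phi K N [] * (K * (N * R) ^ n * (1 + P)) := by
  have hK' : (0:ℝ) < K := by exact_mod_cast hK
  have hN' : (0:ℝ) < N := by exact_mod_cast hN
  set p := (1 + ε) / R with hp
  set r := (K / N : ℝ) / R with hr
  have hp0 : 0 ≤ p := by positivity
  have hr0 : 0 ≤ r := by positivity
  set D := (1 + P) / (K * e ^ 2) with hDdef
  have hD0 : 0 ≤ D := by positivity
  have w0 := ws_nonneg he.le hp0 hr0
  have wge := ws_ge he.le he1 hp0 hr0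
  have wle := ws_le he.le hp0 hr0 hP h
  set w := ws e p r with hw
  have hc : 0 ≤ phi K N [] := by
    simp only [phi, List.map_nil, List.prod_nil]
    exact EE_monomial_nonneg 0 1
  have key := main_bound K N n (fun k => K * (N * R) ^ k * w k) D
    (fun k => by have := w0 k; positivity) hD0 (by simp [hw, ws_zero]) ?_ ?_ n le_rfl [n] (by simp)
  · refine key.trans ?_
    simp only [List.map_cons, List.map_nil, List.prod_cons, List.prod_nil, mul_one]
    have := wle n le_rfl
    gcongr
  · intro m k hmk
    have h1 := wle (m + k) hmk
    have h2 : 1 + P ≤ D * K * (w m * w k) := by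
      have : 1 + P = D * K * (e * e) := by rw [hDdef]; field_simp
      rw [this]
      have := wge m
      have := wge k
      gcongr
      exact w0 m
    have h3 : w (m + k) ≤ D * K * (w m * w k) := h1.trans h2
    calc (K:ℝ) * (N * R) ^ (m + k) * w (m + k)
        ≤ K * (N * R) ^ (m + k) * (D * K * (w m * w k)) := by gcongr
      _ = _ := by rw [pow_add]; ring
  · intro k hk
    have h1 : (N + n + 2 * n * D) ≤ N * (1 + ε) := by linarith
    have hs : ∑ j ∈ Finset.range k, (K * (N * R) ^ (j + 1) * w (j + 1)) * (K * (N * R) ^ (k - 1 - j) * w (k - 1 - j))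
        = K * K * (N * R) ^ k * ∑ j ∈ Finset.range k, w (j + 1) * w (k - 1 - j) := by
      rw [Finset.mul_sum]
      refine Finset.sum_congr rfl fun j hj => ?_
      have := Finset.mem_range.1 hj
      have e1 : ((N * R) ^ k : ℝ) = (N * R) ^ (j + 1) * (N * R) ^ (k - 1 - j) := by
        rw [← pow_add]; congr 1; omega
      rw [e1]; ring
    have hwk := ws_succ e p r k
    rw [← hw] at hwk
    rw [hs]
    have h2 : (N + n + 2 * n * D) * (K * (N * R) ^ k * w k) ≤ N * (1 + ε) * (K * (N * R) ^ k * w k) :=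
      mul_le_mul_of_nonneg_right h1 (by have := w0 k; positivity)
    have h3 : K * (N * R) ^ (k + 1) * w (k + 1) = K * (N * R) ^ (k + 1) * e
        + N * (1 + ε) * (K * (N * R) ^ k * w k)
        + K * K * (N * R) ^ k * ∑ j ∈ Finset.range k, w (j + 1) * w (k - 1 - j) := by
      rw [hwk, hp, hr, pow_succ]
      field_simp
    have h4 : 0 ≤ K * (N * R) ^ (k + 1) * e := by positivity
    linarith

lemma phi_nil (K N : ℕ) : phi K N [] = 2 ^ (K * N) := by
  simp only [phi, List.map_nil, List.prod_nil, EE_apply, map_one]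
  simp [Fintype.card_fun, mul_comm, ← pow_mul]

lemma phi_single (K N n : ℕ) (hN : 1 ≤ N) : phi K N [n]
    = ∑ s : Fin K → Fin N → Bool, (N : ℝ) ^ n *
        (((Stilde (toSign s))ᵀ * Stilde (toSign s)) ^ n).trace := by
  simp only [phi, List.map_cons, List.map_nil, List.prod_cons, List.prod_nil, mul_one, EE_apply]
  refine Finset.sum_congr rfl fun s _ => ?_
  have hN' : (0:ℝ) < N := by exact_mod_cast hN
  have h1 : (M (Fin K) (Fin N)).map (Ev s) = (N : ℝ) • ((Stilde (toSign s))ᵀ * Stilde (toSign s)) := by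
    ext i j
    simp only [M, Matrix.map_apply, Matrix.mul_apply, Matrix.transpose_apply, Y, Matrix.of_apply,
      map_sum, map_mul, Matrix.smul_apply, Stilde, smul_eq_mul, Finset.mul_sum]
    refine Finset.sum_congr rfl fun a _ => ?_
    have hs : Real.sqrt N * Real.sqrt N = N := Real.mul_self_sqrt hN'.le
    have hs0 : Real.sqrt N ≠ 0 := by positivity
    simp only [Ev, coe_eval₂Hom, eval₂_X]
    rw [div_mul_div_comm, hs]
    field_simp
  rw [TT, T, AddMonoidHom.map_trace, ← RingHom.mapMatrix_apply, map_pow, RingHom.mapMatrix_apply,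
    h1, smul_pow, Matrix.trace_smul, smul_eq_mul]

end BPaux

namespace BPaux

lemma conj_geo (d : ℕ → ℝ) (z u : ℝ) (hz : |z| < 1) (hu : |u| < 1) (c : ℝ)
    (h : ∀ t, d (t + 1) = z * d t + c * u ^ t) : Filter.Tendsto d Filter.atTop (nhds 0) := by
  set q := max |z| |u| with hq
  have hq1 : q < 1 := max_lt hz hu
  have hq0 : 0 ≤ q := le_trans (abs_nonneg z) (le_max_left _ _)
  have hb : ∀ t : ℕ, |d (t + 1)| ≤ (|d 0| + (t + 1) * |c|) * q ^ t := by
    have aux : ∀ t : ℕ, |d t| * q ≤ (|d 0| + t * |c|) * q ^ t := by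
      intro t
      induction t with
      | zero => simp; exact mul_le_of_le_one_right (abs_nonneg _) hq1.le
      | succ t ih =>
        have h1 : |d (t + 1)| ≤ q * |d t| + |c| * q ^ t := by
          rw [h t]
          refine (abs_add_le _ _).trans ?_
          rw [abs_mul, abs_mul, abs_pow]
          have h2 : |z| ≤ q := le_max_left _ _
          have h3 : |u| ≤ q := le_max_right _ _
          gcongr
        have h4 := mul_le_mul_of_nonneg_right h1 hq0
        have h5 := mul_le_mul_of_nonneg_right ih hq0
        rw [pow_succ]
        push_cast
        nlinarith
    intro t
    have h1 : |d (t + 1)| ≤ q * |d t| + |c| * q ^ t := by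
      rw [h t]
      refine (abs_add_le _ _).trans ?_
      rw [abs_mul, abs_mul, abs_pow]
      have h2 : |z| ≤ q := le_max_left _ _
      have h3 : |u| ≤ q := le_max_right _ _
      gcongr
    have := aux t
    linarith
  rw [← Filter.tendsto_add_atTop_iff_nat 1]
  refine squeeze_zero_norm hb ?_
  have t1 : Filter.Tendsto (fun t : ℕ => q ^ t) Filter.atTop (nhds 0) :=
    tendsto_pow_atTop_nhds_zero_of_lt_one hq0 hq1
  have t2 : Filter.Tendsto (fun t : ℕ => (t : ℝ) * q ^ t) Filter.atTop (nhds 0) :=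
    tendsto_self_mul_const_pow_of_lt_one hq0 hq1
  have := (t1.const_mul (|d 0| + |c|)).add (t2.const_mul |c|)
  simp only [mul_zero, add_zero] at this
  refine this.congr fun t => ?_
  ring

lemma scalar_conv (d : ℕ → ℝ) (τ q : ℝ) (hq0 : 0 ≤ q) (hq1 : q < 1) (hτ : |τ| < 1 + q)
    (h : ∀ t, d (t + 2) = τ * d (t + 1) - q * d t) :
    Filter.Tendsto d Filter.atTop (nhds 0) := by
  rcases lt_or_ge (τ ^ 2) (4 * q) with hc | hc
  · set V : ℕ → ℝ := fun t => d (t + 1) ^ 2 - τ * d (t + 1) * d t + q * d t ^ 2 with hV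
    have hVs : ∀ t, V t = V 0 * q ^ t := by
      intro t
      induction t with
      | zero => simp
      | succ t ih =>
        have : V (t + 1) = q * V t := by
          simp only [hV]; rw [show t + 1 + 1 = t + 2 from rfl, h t]; ring
        rw [this, ih, pow_succ]; ring
    have hle : ∀ t, d t ^ 2 ≤ (V 0 * q ^ t) / (q - τ ^ 2 / 4) := by
      intro t
      rw [le_div_iff₀ (by linarith), ← hVs]
      simp only [hV]
      nlinarith [sq_nonneg (d (t + 1) - τ / 2 * d t)]
    have t1 : Filter.Tendsto (fun t : ℕ => (V 0 * q ^ t) / (q - τ ^ 2 / 4)) Filter.atTop (nhds 0) := by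
      have := ((tendsto_pow_atTop_nhds_zero_of_lt_one hq0 hq1).const_mul (V 0)).div_const (q - τ ^ 2 / 4)
      simpa using this
    have t2 : Filter.Tendsto (fun t => d t ^ 2) Filter.atTop (nhds 0) :=
      squeeze_zero (fun t => sq_nonneg _) hle t1
    have t3 := t2.sqrt
    simp only [Real.sqrt_sq_eq_abs, Real.sqrt_zero] at t3
    exact (tendsto_zero_iff_abs_tendsto_zero _).2 t3
  · set δ := Real.sqrt (τ ^ 2 - 4 * q) with hδ
    have hδ2 : δ ^ 2 = τ ^ 2 - 4 * q := Real.sq_sqrt (by linarith)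
    have hδ0 : 0 ≤ δ := Real.sqrt_nonneg _
    obtain ⟨ha, hb⟩ := abs_lt.1 hτ
    have hτ2 : |τ| < 2 := by linarith
    obtain ⟨ha2, hb2⟩ := abs_lt.1 hτ2
    have hs1 : δ < 2 - τ := by
      apply lt_of_pow_lt_pow_left₀ 2 (by linarith); rw [hδ2]; nlinarith
    have hs2 : δ < 2 + τ := by
      apply lt_of_pow_lt_pow_left₀ 2 (by linarith); rw [hδ2]; nlinarith
    refine conj_geo d ((τ + δ) / 2) ((τ - δ) / 2) (abs_lt.2 ⟨by linarith, by linarith⟩)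
      (abs_lt.2 ⟨by linarith, by linarith⟩) (d 1 - (τ + δ) / 2 * d 0) ?_
    intro t
    induction t with
    | zero => simp
    | succ t ih =>
      rw [show t + 1 + 1 = t + 2 from rfl, h t, pow_succ, ← mul_assoc]
      have : (d 1 - (τ + δ) / 2 * d 0) * ((τ - δ) / 2) ^ t = d (t + 1) - (τ + δ) / 2 * d t := by
        linarith
      rw [this]
      have : q = (τ ^ 2 - δ ^ 2) / 4 := by linarith
      rw [this]; ring

lemma trace_pow_ge {K : ℕ} (W : Matrix (Fin K) (Fin K) ℝ) (hW : W.PosSemidef) (n : ℕ) (i : Fin K) :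
    hW.isHermitian.eigenvalues i ^ n ≤ (W ^ n).trace := by
  have h1 : (W ^ n).trace = ∑ i, hW.isHermitian.eigenvalues i ^ n := by
    conv_lhs => rw [hW.isHermitian.spectral_theorem]
    rw [← map_pow, Unitary.conjStarAlgAut_apply, Matrix.trace_mul_cycle, Unitary.coe_star_mul_self,
      one_mul, Matrix.diagonal_pow, Matrix.trace_diagonal]
    simp
  rw [h1]
  exact Finset.single_le_sum (f := fun i => hW.isHermitian.eigenvalues i ^ n)
    (fun i _ => pow_nonneg (hW.eigenvalues_nonneg i) n) (Finset.mem_univ i)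

/-- vector convergence -/
lemma vec_conv {K : ℕ} (W : Matrix (Fin K) (Fin K) ℝ) (hW : W.PosSemidef) (c β : ℝ)
    (hc0 : 0 < c) (hc1 : c < 1) (hβ : 0 ≤ β) (hβc : β * c < 1) (n : ℕ) (hn : n ≠ 0)
    (htr : (W ^ n).trace < ((1 + c) * (1 + β * c) / c) ^ n)
    (D : ℕ → Fin K → ℝ)
    (h : ∀ t, D (t + 2) = (c * (1 + β)) • D (t + 1) - c • (W *ᵥ D (t + 1)) - (β * c ^ 2) • D t) :
    Filter.Tendsto D Filter.atTop (nhds 0) := by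
  have hH := hW.isHermitian
  have hsym : Wᵀ = W := by have := hH.eq; rwa [Matrix.conjTranspose_eq_transpose_of_trivial] at this
  set v : Fin K → Fin K → ℝ := fun i => (hH.eigenvectorBasis i).ofLp with hv
  have hcoord : ∀ i, Filter.Tendsto (fun t => v i ⬝ᵥ D t) Filter.atTop (nhds 0) := by
    intro i
    set μ := hH.eigenvalues i with hμ
    have hμ0 : 0 ≤ μ := hW.eigenvalues_nonneg i
    have hμ1 : μ < (1 + c) * (1 + β * c) / c := by
      have := lt_of_le_of_lt (trace_pow_ge W hW n i) htr
      exact lt_of_pow_lt_pow_left₀ n (by positivity) this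
    have hWv : W *ᵥ v i = μ • v i := hH.mulVec_eigenvectorBasis i
    have hdot : ∀ x, v i ⬝ᵥ (W *ᵥ x) = μ * (v i ⬝ᵥ x) := by
      intro x
      rw [Matrix.dotProduct_mulVec, ← Matrix.mulVec_transpose, hsym, hWv, smul_dotProduct, smul_eq_mul]
    have hμ2 : c * μ < (1 + c) * (1 + β * c) := by
      rw [lt_div_iff₀ hc0] at hμ1; linarith
    have hbc : 0 ≤ β * c := by positivity
    refine scalar_conv _ (c * (1 + β - μ)) (β * c ^ 2) (by positivity) (by nlinarith) ?_ ?_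
    · rw [abs_lt]; constructor
      · nlinarith
      · have : 0 ≤ c * μ := by positivity
        nlinarith [mul_pos (sub_pos.2 hc1) (sub_pos.2 hβc)]
    · intro t
      rw [h t]
      simp only [dotProduct_sub, dotProduct_smul, hdot, smul_eq_mul]
      ring
  have hexp : ∀ t, D t = ∑ i, (v i ⬝ᵥ D t) • v i := by
    intro t
    have := hH.eigenvectorBasis.sum_repr' (WithLp.toLp 2 (D t))
    have h2 := congrArg (WithLp.ofLp) this
    rw [WithLp.ofLp_sum] at h2
    conv_lhs => rw [show D t = (WithLp.toLp 2 (D t)).ofLp from rfl, ← h2]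
    refine Finset.sum_congr rfl fun i _ => ?_
    rw [WithLp.ofLp_smul]
    congr 1
    simp [EuclideanSpace.inner_eq_star_dotProduct, hv, dotProduct_comm]
  rw [show D = fun t => ∑ i, (v i ⬝ᵥ D t) • v i from funext hexp]
  have : (0 : Fin K → ℝ) = ∑ i, (0:ℝ) • v i := by simp
  rw [this]
  exact tendsto_finsetSum _ fun i _ => (hcoord i).smul_const (v i)

lemma bp_conv {K N : ℕ} (hN : 1 ≤ N) (σ L : ℝ) (hσ : 0 < σ) (hL : 0 < L)
    (hfix : 1 / L = σ ^ 2 + ((K : ℝ) / N) / (1 + L)) (s : Fin K → Fin N → ℝ) (n : ℕ) (hn : n ≠ 0)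
    (htr : (((Stilde s)ᵀ * Stilde s) ^ n).trace
      < ((1 + L / (1 + L)) * (1 + ((K : ℝ) / N) * (L / (1 + L))) / (L / (1 + L))) ^ n)
    (y : Fin N → ℝ) : ∃ Ginf : Fin K → ℝ,
      Filter.Tendsto (fun t => (approxBP (1 + L) (1 / L) s y t).1) Filter.atTop (nhds Ginf) ∧
      (1 / (1 + L)) • Ginf = mmseEstimate σ s y := by
  have hN' : (0:ℝ) < N := by exact_mod_cast hN
  set W := (Stilde s)ᵀ * Stilde s with hWdef
  set β := (K : ℝ) / N with hβ
  have hβ0 : 0 ≤ β := by positivity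
  set c := L / (1 + L) with hc
  have hc0 : 0 < c := by positivity
  have hc1 : c < 1 := by rw [hc, div_lt_one (by positivity)]; linarith
  have hfix2 : 1 - β * c = L * σ ^ 2 := by
    have : L * (1 / L) = L * (σ ^ 2 + β / (1 + L)) := by rw [hfix]
    rw [mul_one_div_cancel hL.ne'] at this
    rw [hc]; linear_combination this
  have h1c : 1 - c = 1 / (1 + L) := by rw [hc]; field_simp; ring
  have hβc : β * c < 1 := by have : 0 < L * σ ^ 2 := by positivity
                             linarith
  have hW : W.PosSemidef := by
    have := Matrix.posSemidef_conjTranspose_mul_self (Stilde s)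
    rwa [Matrix.conjTranspose_eq_transpose_of_trivial] at this
  set x := mmseEstimate σ s y with hx
  set g := (Stilde s)ᵀ *ᵥ y with hg
  have hinv : (σ ^ 2 • (1 : Matrix (Fin K) (Fin K) ℝ) + W) *ᵥ x = g := by
    have hpd : (σ ^ 2 • (1 : Matrix (Fin K) (Fin K) ℝ) + W).PosDef :=
      (Matrix.PosDef.one.smul (by positivity)).add_posSemidef hW
    rw [hx, mmseEstimate, Matrix.mulVec_mulVec, Matrix.mul_nonsing_inv _ ((Matrix.isUnit_iff_isUnit_det _).1 hpd.isUnit),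
      Matrix.one_mulVec]
  have hinv2 : W *ᵥ x = g - σ ^ 2 • x := by
    rw [Matrix.add_mulVec, Matrix.smul_mulVec, Matrix.one_mulVec] at hinv
    rw [← hinv]; abel
  set G : ℕ → Fin K → ℝ := fun t => (approxBP (1 + L) (1 / L) s y t).1 with hG
  set H : ℕ → Fin N → ℝ := fun t => (approxBP (1 + L) (1 / L) s y t).2 with hH
  have hs0 : Real.sqrt N ≠ 0 := by positivity
  have rG : ∀ t, G (t + 1) = c • G t + L • ((Stilde s)ᵀ *ᵥ H t) := by
    intro t
    ext i
    simp only [hG, hH, approxBP, Pi.add_apply, Pi.smul_apply, smul_eq_mul, Matrix.mulVec, dotProduct,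
      Matrix.transpose_apply, Stilde, Matrix.of_apply, Finset.mul_sum]
    congr 1
    · rw [hc]; field_simp
    · refine Finset.sum_congr rfl fun a _ => ?_
      field_simp
  have rH : ∀ t, H (t + 1) = y + (β * c) • H t - (1 / (1 + L)) • (Stilde s *ᵥ G (t + 1)) := by
    intro t
    ext a
    have e0 : H (t + 1) a = y a + (((K : ℝ) / N) / ((1 + L) * (1 / L))) * H t a
        - (1 / ((1 + L) * Real.sqrt N)) * ∑ k : Fin K, s k a * G (t + 1) k := rfl
    have e1 : ((K : ℝ) / N) / ((1 + L) * (1 / L)) = β * c := by rw [hc, hβ]; field_simp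
    have e2 : (Stilde s *ᵥ G (t + 1)) a = (1 / Real.sqrt N) * ∑ k : Fin K, s k a * G (t + 1) k := by
      simp only [Matrix.mulVec, dotProduct, Stilde, Matrix.of_apply, Finset.mul_sum]
      refine Finset.sum_congr rfl fun k _ => ?_
      ring
    rw [e0, e1]
    simp only [Pi.add_apply, Pi.sub_apply, Pi.smul_apply, smul_eq_mul, e2]
    have e3 : 1 / ((1 + L) * Real.sqrt N) = 1 / (1 + L) * (1 / Real.sqrt N) := by field_simp
    rw [e3]; ring
  have rGG : ∀ t, G (t + 2) = (c * (1 + β)) • G (t + 1) - c • (W *ᵥ G (t + 1)) - (β * c ^ 2) • G t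
      + L • g := by
    intro t
    have h1 := rG t
    have h2 := rG (t + 1)
    rw [rH t, Matrix.mulVec_sub, Matrix.mulVec_add, Matrix.mulVec_smul, Matrix.mulVec_smul,
      Matrix.mulVec_mulVec, ← hWdef, ← hg] at h2
    rw [show t + 2 = t + 1 + 1 from rfl, h2]
    have h3 : L • ((Stilde s)ᵀ *ᵥ H t) = G (t + 1) - c • G t := by rw [h1]; abel
    ext i
    have h4 := congrFun h3 i
    simp only [Pi.add_apply, Pi.sub_apply, Pi.smul_apply, smul_eq_mul] at h4 ⊢
    have hcl : L * (1 / (1 + L)) = c := by rw [hc]; ring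
    linear_combination (β * c) * h4 - (W *ᵥ G (t + 1)) i * hcl
  refine ⟨(1 + L) • x, ?_, ?_⟩
  · have key := vec_conv W hW c β hc0 hc1 hβ0 hβc n hn htr (fun t => G t - (1 + L) • x) ?_
    · have := key.add_const ((1 + L) • x)
      simpa using this
    · intro t
      rw [rGG t, Matrix.mulVec_sub, Matrix.mulVec_smul, hinv2]
      ext i
      simp only [Pi.add_apply, Pi.sub_apply, Pi.smul_apply, smul_eq_mul]
      have hcl : c * (1 + L) = L := by rw [hc]; field_simp
      have h5 : (1 - c) * (1 - β * c) = c * σ ^ 2 := by rw [h1c, hfix2, hc]; ring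
      linear_combination (-(g i)) * hcl - (1 + L) * x i * h5
  · rw [smul_smul, one_div_mul_cancel (by positivity), one_smul]

end BPaux

namespace BPaux

lemma gap (σ L β : ℝ) (hσ : 0 < σ) (hL : 0 < L) (hβ : 0 < β)
    (hfix : 1 / L = σ ^ 2 + β / (1 + L)) :
    (1 + Real.sqrt β) ^ 2 + (min (1 / 2) (σ ^ 2) / 2) ^ 2
      ≤ (1 + L / (1 + L)) * (1 + β * (L / (1 + L))) / (L / (1 + L)) := by
  obtain ⟨c, hc⟩ : ∃ c, c = L / (1 + L) := ⟨_, rfl⟩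
  obtain ⟨q, hq⟩ : ∃ q, q = Real.sqrt β := ⟨_, rfl⟩
  obtain ⟨g, hg⟩ : ∃ g, g = min (1 / 2) (σ ^ 2) := ⟨_, rfl⟩
  rw [← hc, ← hq, ← hg]
  have hq0 : 0 < q := by rw [hq]; exact Real.sqrt_pos.2 hβ
  have hqq : β = q ^ 2 := by rw [hq, Real.sq_sqrt hβ.le]
  have hc0 : 0 < c := by rw [hc]; positivity
  have hc1 : c < 1 := by rw [hc, div_lt_one (by linarith)]; linarith
  have hbc : β * c = 1 - L * σ ^ 2 := by
    rw [hc]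
    have h1 : (1:ℝ) + L ≠ 0 := by positivity
    have h2 : L * (1 / L) = 1 := by field_simp
    rw [hfix] at h2
    have : L * (σ ^ 2 + β / (1 + L)) = L * σ ^ 2 + β * (L / (1 + L)) := by ring
    linarith
  have hg0 : 0 < g := by rw [hg]; positivity
  have hg1 : g ≤ 1 / 2 := by rw [hg]; exact min_le_left _ _
  have hg2 : g ≤ σ ^ 2 := by rw [hg]; exact min_le_right _ _
  have hx : (c * q) ^ 2 ≤ 1 - g := by
    have e : (c * q) ^ 2 = c * (β * c) := by rw [hqq]; ring
    rw [e]
    have hp : 0 < L * σ ^ 2 := by positivity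
    have hbc0 : 0 < β * c := by positivity
    rcases le_total L 1 with h | h
    · have : c ≤ 1 / 2 := by rw [hc, div_le_div_iff₀ (by linarith) (by norm_num)]; linarith
      nlinarith
    · have : σ ^ 2 ≤ L * σ ^ 2 := by nlinarith [sq_nonneg σ]
      nlinarith
  have hx2 : c * q ≤ 1 - g / 2 := by
    refine (sq_le_sq₀ (by positivity) (by linarith)).1 ?_
    nlinarith [sq_nonneg g]
  rw [le_div_iff₀ hc0, hqq]
  have h3 : (g / 2) ^ 2 ≤ (1 - c * q) ^ 2 := by
    apply pow_le_pow_left₀ (by linarith); linarith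
  nlinarith [sq_nonneg g]

lemma asym (A ε D : ℝ) (hA : 0 ≤ A) (hε : 0 < ε) (hD : 0 ≤ D) :
    ∃ N0 : ℕ, 2 ≤ N0 ∧ ∀ N : ℕ, N0 ≤ N →
      ((⌈A * Real.log N⌉₊ + 1 : ℕ) : ℝ) + D * ((⌈A * Real.log N⌉₊ + 1 : ℕ) : ℝ) ^ 3 / N ≤ ε * N := by
  have h1 : (fun x : ℝ => A * Real.log x + 2) =o[Filter.atTop] (fun x : ℝ => x ^ (1 / 3 : ℝ)) := by
    apply Asymptotics.IsLittleO.add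
    · exact (isLittleO_log_rpow_atTop (by norm_num)).const_mul_left A
    · exact Asymptotics.isLittleO_const_left.2 (Or.inr
        (tendsto_norm_atTop_atTop.comp (tendsto_rpow_atTop (by norm_num))))
  obtain ⟨d, hd0, hd⟩ : ∃ d : ℝ, 0 < d ∧ (1 + D) * d ^ 3 ≤ ε := by
    refine ⟨min 1 (ε / (1 + D)), by positivity, ?_⟩
    have a1 : min 1 (ε / (1 + D)) ≤ 1 := min_le_left _ _
    have a2 : min 1 (ε / (1 + D)) ≤ ε / (1 + D) := min_le_right _ _
    have a0 : 0 < min 1 (ε / (1 + D)) := by positivity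
    have a3 : (min 1 (ε / (1 + D))) ^ 3 ≤ ε / (1 + D) :=
      (pow_le_of_le_one a0.le a1 (by norm_num)).trans a2
    calc (1 + D) * _ ≤ (1 + D) * (ε / (1 + D)) := by gcongr
      _ = ε := by field_simp
  have h2 := (h1.bound hd0).and (Filter.eventually_ge_atTop (2:ℝ))
  have h3 := tendsto_natCast_atTop_atTop.eventually h2
  obtain ⟨N1, hN1⟩ := Filter.eventually_atTop.1 h3
  refine ⟨max 2 N1, le_max_left _ _, fun N hN => ?_⟩
  obtain ⟨hb, hN2⟩ := hN1 N ((le_max_right _ _).trans hN)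
  have hN0 : (0:ℝ) < N := by linarith
  have hlog : 0 ≤ A * Real.log N := mul_nonneg hA (Real.log_nonneg (by linarith))
  rw [Real.norm_of_nonneg (by linarith), Real.norm_of_nonneg (by positivity)] at hb
  obtain ⟨m, hm⟩ : ∃ m : ℝ, m = ((⌈A * Real.log N⌉₊ + 1 : ℕ) : ℝ) := ⟨_, rfl⟩
  rw [← hm]
  have hm1 : 1 ≤ m := by rw [hm]; push_cast; linarith [Nat.cast_nonneg (α := ℝ) ⌈A * Real.log N⌉₊]
  have hm2 : m ≤ d * (N:ℝ) ^ (1 / 3 : ℝ) := by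
    refine le_trans ?_ hb
    rw [hm]; push_cast; linarith [Nat.ceil_lt_add_one hlog]
  have hm3 : m ^ 3 ≤ d ^ 3 * N := by
    calc m ^ 3 ≤ (d * (N:ℝ) ^ (1 / 3 : ℝ)) ^ 3 := by gcongr
      _ = d ^ 3 * N := by
        rw [mul_pow, ← Real.rpow_natCast ((N:ℝ) ^ (1 / 3 : ℝ)), ← Real.rpow_mul hN0.le]; norm_num
  have hm4 : m ≤ m ^ 3 := le_self_pow₀ hm1 (by norm_num)
  have hm5 : D * m ^ 3 / N ≤ D * m ^ 3 := div_le_self (by positivity) (by linarith)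
  calc m + D * m ^ 3 / N ≤ (1 + D) * m ^ 3 := by linarith
    _ ≤ (1 + D) * (d ^ 3 * N) := by gcongr
    _ = ((1 + D) * d ^ 3) * N := by ring
    _ ≤ ε * N := by gcongr

open Classical in
lemma bad_count (K N n : ℕ) (hN : 1 ≤ N) (R P T : ℝ) 
    (h : phi K N [n] ≤ phi K N [] * (K * (N * R) ^ n * (1 + P))) :
    ((Finset.univ.filter fun s : Fin K → Fin N → Bool =>
      T ^ n ≤ (((Stilde (toSign s))ᵀ * Stilde (toSign s)) ^ n).trace).card : ℝ) * T ^ n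
      ≤ 2 ^ (K * N) * (K * R ^ n * (1 + P)) := by
  have hN0 : (0:ℝ) < (N:ℝ) ^ n := by have : (0:ℝ) < N := by exact_mod_cast hN
                                     positivity
  rw [phi_nil, phi_single K N n hN, ← Finset.mul_sum, mul_pow] at h
  have h2 : (N:ℝ) ^ n * ∑ s : Fin K → Fin N → Bool, (((Stilde (toSign s))ᵀ * Stilde (toSign s)) ^ n).trace
      ≤ (N:ℝ) ^ n * (2 ^ (K * N) * (K * R ^ n * (1 + P))) := by
    refine h.trans (le_of_eq (by ring))
  refine le_trans ?_ (le_of_mul_le_mul_left h2 hN0)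
  rw [← nsmul_eq_mul]
  refine (Finset.card_nsmul_le_sum _ _ _ fun s hs => (Finset.mem_filter.1 hs).2).trans ?_
  refine Finset.sum_le_sum_of_subset_of_nonneg (Finset.filter_subset _ _) fun s _ _ => ?_
  have hW : ((Stilde (toSign s))ᵀ * Stilde (toSign s)).PosSemidef := by
    have := Matrix.posSemidef_conjTranspose_mul_self (Stilde (toSign s))
    rwa [Matrix.conjTranspose_eq_transpose_of_trivial] at this
  exact (hW.pow n).trace_nonneg

lemma key_cond (q g η ε n a0 q1 : ℝ) (hq : 0 < q) (ha0 : 0 < a0) (hqa : a0 ≤ q) (hq1 : q ≤ q1)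
    (hg : 0 < g) (hε : 0 < ε) (hn : 0 < n)
    (h : η + ε * (1 + 1 / a0) ≤ 1 / q1 * (g / ((1 + q1) ^ 2 + g))) :
    n * (η / n) + (1 + ε) / ((1 + q) ^ 2 + g) * (1 + 1 / q)
      + q ^ 2 / ((1 + q) ^ 2 + g) * (1 / q * (1 + 1 / q)) ≤ 1 / q := by
  have hR : 0 < (1 + q) ^ 2 + g := by positivity
  have hR1 : 1 ≤ (1 + q) ^ 2 + g := by nlinarith
  have e1 : n * (η / n) = η := by field_simp
  have e2 : 1 / q * (g / ((1 + q) ^ 2 + g)) = 1 / q - (1 / ((1 + q) ^ 2 + g) * (1 + 1 / q)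
      + q ^ 2 / ((1 + q) ^ 2 + g) * (1 / q * (1 + 1 / q))) := by
    field_simp; ring
  have e3 : 1 / q1 * (g / ((1 + q1) ^ 2 + g)) ≤ 1 / q * (g / ((1 + q) ^ 2 + g)) := by
    gcongr
  have e4 : ε / ((1 + q) ^ 2 + g) * (1 + 1 / q) ≤ ε * (1 + 1 / a0) := by
    gcongr
    exact div_le_self hε.le hR1
  rw [e1, add_div, add_mul]
  linarith

lemma ratio_aux (x z g : ℝ) (h : x ≤ z) (hg : 0 < g) :
    (x + g) * (z + 2 * g) ≤ (z + g) * (x + 2 * g) := by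
  linarith [mul_le_mul_of_nonneg_left h hg.le]

set_option maxHeartbeats 1000000 in
lemma main (σ α a : ℝ)
    (hσ : 0 < σ) (hα : 0 < α) (ha : 0 < a)
    (Lam : ℕ → ℝ)
    (hLam : ∀ N : ℕ, 1 ≤ N → 0 < Lam N ∧
      1 / Lam N = σ ^ 2 + ((⌈α * (N : ℝ)⌉₊ : ℝ) / (N : ℝ)) / (1 + Lam N)) :
    ∃ C : ℝ, 0 < C ∧ ∀ N : ℕ, 1 ≤ N →
      (1 - C * (N : ℝ) ^ (-a)) * 2 ^ (⌈α * (N : ℝ)⌉₊ * N) ≤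
        (Nat.card {s : Fin ⌈α * (N : ℝ)⌉₊ → Fin N → Bool //
          ∀ y : Fin N → ℝ, ∃ Ginf : Fin ⌈α * (N : ℝ)⌉₊ → ℝ,
            Filter.Tendsto
              (fun t => (approxBP (1 + Lam N) (1 / Lam N) (toSign s) y t).1)
              Filter.atTop (nhds Ginf) ∧
            (1 / (1 + Lam N)) • Ginf = mmseEstimate σ (toSign s) y} : ℝ) := by
  classical
  obtain ⟨g, hg⟩ : ∃ g, g = (min (1 / 2) (σ ^ 2) / 2) ^ 2 / 2 := ⟨_, rfl⟩
  have hg0 : 0 < g := by rw [hg]; positivity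
  obtain ⟨a0, ha0⟩ : ∃ x, x = Real.sqrt α := ⟨_, rfl⟩
  obtain ⟨q1, hq1⟩ : ∃ x, x = Real.sqrt (α + 1) := ⟨_, rfl⟩
  have ha00 : 0 < a0 := by rw [ha0]; positivity
  have hq10 : 0 < q1 := by rw [hq1]; positivity
  obtain ⟨ρ, hρ⟩ : ∃ x, x = 1 / q1 * (g / ((1 + q1) ^ 2 + g)) := ⟨_, rfl⟩
  have hρ0 : 0 < ρ := by rw [hρ]; positivity
  obtain ⟨η, hη0, hη1, hηρ⟩ : ∃ η : ℝ, 0 < η ∧ η ≤ 1 ∧ η ≤ ρ / 2 :=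
    ⟨min 1 (ρ / 2), by positivity, min_le_left _ _, min_le_right _ _⟩
  obtain ⟨ε, hε⟩ : ∃ ε : ℝ, ε = ρ / 2 / (1 + 1 / a0) := ⟨_, rfl⟩
  have hε0 : 0 < ε := by rw [hε]; positivity
  have hεe : ε * (1 + 1 / a0) = ρ / 2 := by rw [hε]; field_simp
  obtain ⟨κ, hκ⟩ : ∃ x, x = ((1 + q1) ^ 2 + g) / ((1 + q1) ^ 2 + 2 * g) := ⟨_, rfl⟩
  have hκ0 : 0 < κ := by rw [hκ]; positivity
  have hκ1 : κ < 1 := by rw [hκ, div_lt_one (by positivity)]; linarith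
  have hlk : Real.log κ < 0 := Real.log_neg hκ0 hκ1
  obtain ⟨A, hA⟩ : ∃ x, x = (a + 1) / (- Real.log κ) := ⟨_, rfl⟩
  have hA0 : 0 ≤ A := by rw [hA]; exact div_nonneg (by linarith) (by linarith)
  obtain ⟨N0, hN02, hN0⟩ := asym A ε (2 * (1 + 1 / a0) / (α * η ^ 2)) hA0 hε0 (by positivity)
  refine ⟨(α + 1) * (1 + 1 / a0) + (N0 : ℝ) ^ a, by positivity, fun N hN => ?_⟩
  have hNr : (1:ℝ) ≤ N := by exact_mod_cast hN
  have hNp : (0:ℝ) < N := by linarith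
  have hNa : 0 < (N:ℝ) ^ (-a) := by positivity
  rcases lt_or_ge N N0 with hlt | hge
  · have h1 : 1 ≤ (N0 : ℝ) ^ a * (N:ℝ) ^ (-a) := by
      rw [Real.rpow_neg hNp.le, ← div_eq_mul_inv, one_le_div (by positivity)]
      exact Real.rpow_le_rpow hNp.le (by exact_mod_cast hlt.le) ha.le
    have h2 : 0 ≤ (α + 1) * (1 + 1 / a0) * (N:ℝ) ^ (-a) := by positivity
    refine le_trans (mul_nonpos_of_nonpos_of_nonneg ?_ (by positivity)) (Nat.cast_nonneg _)
    linarith [add_mul ((α + 1) * (1 + 1 / a0)) ((N0 : ℝ) ^ a) ((N:ℝ) ^ (-a))]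
  · have hn := hN0 N hge
    obtain ⟨hL, hfix⟩ := hLam N hN
    obtain ⟨K, hK⟩ : ∃ K, K = ⌈α * (N : ℝ)⌉₊ := ⟨_, rfl⟩
    rw [← hK] at hfix ⊢
    have hK1 : α * N ≤ K := by rw [hK]; exact Nat.le_ceil _
    have hK2 : (K:ℝ) ≤ (α + 1) * N := by
      have := Nat.ceil_lt_add_one (a := α * (N:ℝ)) (by positivity)
      rw [hK]; nlinarith
    have hKp : (0:ℝ) < K := lt_of_lt_of_le (by positivity) hK1
    have hKn : 1 ≤ K := by exact_mod_cast hKp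
    obtain ⟨n, hnn⟩ : ∃ n, n = ⌈A * Real.log N⌉₊ + 1 := ⟨_, rfl⟩
    rw [← hnn] at hn
    have hn1 : 1 ≤ n := by omega
    have hn1r : (1:ℝ) ≤ n := by exact_mod_cast hn1
    have hnp : (0:ℝ) < n := by linarith
    obtain ⟨q, hq⟩ : ∃ q, q = Real.sqrt ((K:ℝ) / N) := ⟨_, rfl⟩
    have hβ : 0 < (K:ℝ) / N := by positivity
    have hqq : q ^ 2 = (K:ℝ) / N := by rw [hq, Real.sq_sqrt hβ.le]
    have hq0 : 0 < q := by rw [hq]; positivity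
    have hqa : a0 ≤ q := by rw [hq, ha0]; exact Real.sqrt_le_sqrt (by rw [le_div_iff₀ hNp]; exact hK1)
    have hqb : q ≤ q1 := by rw [hq, hq1]; exact Real.sqrt_le_sqrt (by rw [div_le_iff₀ hNp]; exact hK2)
    have hgap := gap σ (Lam N) _ hσ hL hβ hfix
    obtain ⟨T, hT⟩ : ∃ T, T = (1 + Lam N / (1 + Lam N)) * (1 + (K:ℝ) / N * (Lam N / (1 + Lam N))) / (Lam N / (1 + Lam N)) := ⟨_, rfl⟩
    rw [← hT, ← hq, show (min (1 / 2) (σ ^ 2) / 2) ^ 2 = 2 * g by rw [hg]; ring] at hgap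
    have hT0 : 0 < T := lt_of_lt_of_le (by positivity) hgap
    obtain ⟨R, hR⟩ : ∃ R, R = (1 + q) ^ 2 + g := ⟨_, rfl⟩
    have hR0 : 0 < R := by rw [hR]; positivity
    have hkc := key_cond q g η ε n a0 q1 hq0 ha00 hqa hqb hg0 hε0 hnp (by rw [← hρ, hεe]; linarith)
    rw [← hR, hqq] at hkc
    have hP : 1 / q ≤ 1 / a0 := by gcongr
    have hcond : (n:ℝ) + 2 * n * ((1 + 1 / q) / (K * (η / n) ^ 2)) ≤ ε * N := by
      refine le_trans ?_ hn
      have : 2 * (n:ℝ) * ((1 + 1 / q) / (K * (η / n) ^ 2)) ≤ 2 * (n:ℝ) * ((1 + 1 / a0) / ((α * N) * (η / n) ^ 2)) := by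
        gcongr
      have e : 2 * (n:ℝ) * ((1 + 1 / a0) / ((α * N) * (η / n) ^ 2)) = 2 * (1 + 1 / a0) / (α * η ^ 2) * (n:ℝ) ^ 3 / N := by
        field_simp
      linarith
    have hmb := moment_bound K N n hKn hN R (η / n) (1 / q) ε hR0 (by positivity)
      ((div_le_self hη0.le hn1r).trans hη1) (by positivity) hε0.le hkc hcond
    have hbad := bad_count K N n hN R (1 / q) T hmb
    obtain ⟨bad, hbd⟩ : ∃ b : Finset (Fin K → Fin N → Bool), b = (Finset.univ.filter fun s : Fin K → Fin N → Bool =>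
      T ^ n ≤ (((Stilde (toSign s))ᵀ * Stilde (toSign s)) ^ n).trace) := ⟨_, rfl⟩
    rw [← hbd] at hbad
    have hRT : R / T ≤ κ := by
      rw [div_le_iff₀ hT0]
      refine le_trans ?_ (mul_le_mul_of_nonneg_left hgap hκ0.le)
      rw [hκ, hR, div_mul_eq_mul_div, le_div_iff₀ (by positivity)]
      exact ratio_aux _ _ g (by gcongr) hg0
    have hkn : κ ^ n ≤ (N:ℝ) ^ (-(a + 1)) := by
      rw [← Real.rpow_natCast, Real.rpow_def_of_pos hκ0, Real.rpow_def_of_pos hNp]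
      apply Real.exp_le_exp.2
      have h1 : A * Real.log N ≤ n := by
        rw [hnn]; push_cast; linarith [Nat.le_ceil (A * Real.log N)]
      have h2 : A * (-Real.log κ) = a + 1 := by rw [hA, div_mul_cancel₀]; linarith
      have h3 : A * Real.log N * (-Real.log κ) ≤ n * (-Real.log κ) := by
        apply mul_le_mul_of_nonneg_right h1; linarith
      have h4 : A * Real.log N * (-Real.log κ) = (a + 1) * Real.log N := by rw [← h2]; ring
      linarith
    have hbad2 : (bad.card : ℝ) ≤ 2 ^ (K * N) * ((α + 1) * (1 + 1 / a0) * (N:ℝ) ^ (-a)) := by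
      have h1 : (bad.card : ℝ) ≤ 2 ^ (K * N) * (K * (R / T) ^ n * (1 + 1 / q)) := by
        rw [← le_div_iff₀ (by positivity)] at hbad
        refine hbad.trans (le_of_eq ?_)
        rw [div_pow]; ring
      have hNN : (N:ℝ) ^ (-a) = N * (N:ℝ) ^ (-(a + 1)) := by
        rw [show -a = 1 + -(a + 1) by ring, Real.rpow_add hNp, Real.rpow_one]
      refine h1.trans ?_
      calc (2:ℝ) ^ (K * N) * (K * (R / T) ^ n * (1 + 1 / q))
          ≤ 2 ^ (K * N) * (((α + 1) * N) * (N:ℝ) ^ (-(a + 1)) * (1 + 1 / a0)) := by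
            have : (R / T) ^ n ≤ (N:ℝ) ^ (-(a + 1)) :=
              (pow_le_pow_left₀ (by positivity) hRT n).trans hkn
            gcongr
        _ = _ := by rw [hNN]; ring
    rw [Nat.card_eq_fintype_card, Fintype.card_subtype]
    have hsub : badᶜ ⊆ Finset.univ.filter fun s : Fin K → Fin N → Bool =>
        ∀ y : Fin N → ℝ, ∃ Ginf : Fin K → ℝ,
            Filter.Tendsto
              (fun t => (approxBP (1 + Lam N) (1 / Lam N) (toSign s) y t).1)
              Filter.atTop (nhds Ginf) ∧
            (1 / (1 + Lam N)) • Ginf = mmseEstimate σ (toSign s) y := by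
      intro s hs
      rw [Finset.mem_compl, hbd, Finset.mem_filter] at hs
      simp only [Finset.mem_univ, true_and, not_le] at hs
      refine Finset.mem_filter.2 ⟨Finset.mem_univ _, fun y => ?_⟩
      rw [hT] at hs
      exact bp_conv hN σ (Lam N) hσ hL hfix (toSign s) n (by omega) hs y
    have hcard := Finset.card_le_card hsub
    rw [Finset.card_compl] at hcard
    have htot : Fintype.card (Fin K → Fin N → Bool) = 2 ^ (K * N) := by
      simp [← pow_mul, mul_comm]
    rw [htot] at hcard
    have hcard2 : (2:ℝ) ^ (K * N) - bad.card ≤ _ :=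
      le_trans (by
        have := Nat.sub_le_iff_le_add.1 (le_refl (2 ^ (K * N) - bad.card))
        have h : ((2 ^ (K * N) : ℕ):ℝ) ≤ ((2 ^ (K * N) - bad.card + bad.card : ℕ) : ℝ) := by exact_mod_cast this
        push_cast at h ⊢
        linarith) (Nat.cast_le (α := ℝ).2 hcard)
    refine le_trans ?_ hcard2
    have : 0 ≤ (N0 : ℝ) ^ a * (N:ℝ) ^ (-a) * 2 ^ (K * N) := by positivity
    have e : (1 - ((α + 1) * (1 + 1 / a0) + (N0 : ℝ) ^ a) * (N : ℝ) ^ (-a)) * 2 ^ (K * N)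
      = 2 ^ (K * N) - 2 ^ (K * N) * ((α + 1) * (1 + 1 / a0) * (N:ℝ) ^ (-a))
        - (N0 : ℝ) ^ a * (N:ℝ) ^ (-a) * 2 ^ (K * N) := by ring
    rw [e]
    linarith

end BPaux


/-- **Proposition 1.** With K = ⌈αN⌉ and Λ = Λ_N the unique positive
solution of 1/Λ = σ² + (K/N)/(1+Λ), the approximate BP iteration (with λ* = 1+Λ,
λ̂* = 1/Λ) converges with probability at least 1 − C·N^{−a} over the i.i.d. uniform ±1
signatures, and G^{(∞)}/(1+Λ) is the MMSE estimate, for every y. -/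
theorem approx_bp_convergence_and_correctness (σ α a : ℝ)
    (hσ : 0 < σ) (hα : 0 < α) (ha : 0 < a)
    (Lam : ℕ → ℝ)
    (hLam : ∀ N : ℕ, 1 ≤ N → 0 < Lam N ∧
      1 / Lam N = σ ^ 2 + ((⌈α * (N : ℝ)⌉₊ : ℝ) / (N : ℝ)) / (1 + Lam N)) :
    ∃ C : ℝ, 0 < C ∧ ∀ N : ℕ, 1 ≤ N →
      (1 - C * (N : ℝ) ^ (-a)) * 2 ^ (⌈α * (N : ℝ)⌉₊ * N) ≤
        (Nat.card {s : Fin ⌈α * (N : ℝ)⌉₊ → Fin N → Bool //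
          ∀ y : Fin N → ℝ, ∃ Ginf : Fin ⌈α * (N : ℝ)⌉₊ → ℝ,
            Filter.Tendsto
              (fun t => (approxBP (1 + Lam N) (1 / Lam N) (toSign s) y t).1)
              Filter.atTop (nhds Ginf) ∧
            (1 / (1 + Lam N)) • Ginf = mmseEstimate σ (toSign s) y} : ℝ) := by
  exact BPaux.main σ α a hσ hα ha Lam hLam
end

section
/- Fix integers K ≥ 1 and N ≥ 1, σ > 0, a matrix s with entries s_{ia} ∈ {+1, −1}, and y ∈ ℝ^N. Then after one BP iteration, for every i ∈ [K]: G_i^{(1)} = (1/(σ² + (K−1)/N))·(1/√N)·Σ_{b=1}^N s_{ib}·y_b and L_i^{(1)} = 1 + 1/(σ² + (K−1)/N); consequently the BP estimate after the first iteration, x̂_i^{(1)} = G_i^{(1)}/L_i^{(1)} = (1/(1 + σ² + (K−1)/N))·(1/√N)·Σ_{b=1}^N s_{ib}·y_b, is a positive multiple (independent of i) of the matched filter output (1/√N)·Σ_{b=1}^N s_{ib}·y_b. -/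
open Finset

namespace BP

variable {K N : ℕ}

/-- Chip-to-user variance message λ̂_{a→i} computed from user-to-chip messages `lam`. -/
noncomputable def lamHat (σ : ℝ) (s : Fin K → Fin N → ℝ)
    (lam : Fin K → Fin N → ℝ) (a : Fin N) (i : Fin K) : ℝ :=
  σ ^ 2 + (1 / (N : ℝ)) * ∑ k ∈ Finset.univ.erase i, s k a ^ 2 / lam k a

/-- User-to-chip variance messages λ^{(t)}_{i→a}. -/
noncomputable def lam (σ : ℝ) (s : Fin K → Fin N → ℝ) : ℕ → Fin K → Fin N → ℝ
  | 0 => fun _ _ => 1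
  | t + 1 => fun i a =>
      1 + (1 / (N : ℝ)) * ∑ b ∈ Finset.univ.erase a,
        s i b ^ 2 / lamHat σ s (lam σ s t) b i

/-- Chip-to-user mean message γ̂_{a→i} computed from time-`t` messages. -/
noncomputable def gamHat (s : Fin K → Fin N → ℝ) (y : Fin N → ℝ)
    (lamt gamt : Fin K → Fin N → ℝ) (a : Fin N) (i : Fin K) : ℝ :=
  y a - (1 / Real.sqrt N) * ∑ k ∈ Finset.univ.erase i, (s k a / lamt k a) * gamt k a

/-- User-to-chip mean messages γ^{(t)}_{i→a}. -/
noncomputable def gam (σ : ℝ) (s : Fin K → Fin N → ℝ) (y : Fin N → ℝ) :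
    ℕ → Fin K → Fin N → ℝ
  | 0 => fun _ _ => 0
  | t + 1 => fun i a =>
      (1 / Real.sqrt N) * ∑ b ∈ Finset.univ.erase a,
        (s i b / lamHat σ s (lam σ s t) b i) *
          gamHat s y (lam σ s t) (gam σ s y t) b i

/-- BP output G_i^{(t)} (with the convention G_i^{(0)} = 0). -/
noncomputable def Gout (σ : ℝ) (s : Fin K → Fin N → ℝ) (y : Fin N → ℝ) :
    ℕ → Fin K → ℝ
  | 0 => fun _ => 0
  | t + 1 => fun i =>
      (1 / Real.sqrt N) * ∑ b : Fin N,
        (s i b / lamHat σ s (lam σ s t) b i) *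
          gamHat s y (lam σ s t) (gam σ s y t) b i

/-- BP output L_i^{(t)} (with the convention L_i^{(0)} = 1). -/
noncomputable def Lout (σ : ℝ) (s : Fin K → Fin N → ℝ) : ℕ → Fin K → ℝ
  | 0 => fun _ => 1
  | t + 1 => fun i =>
      1 + (1 / (N : ℝ)) * ∑ b : Fin N, s i b ^ 2 / lamHat σ s (lam σ s t) b i

end BP
/-- After one BP iteration, the outputs are
G_i^{(1)} = (1/(σ²+(K−1)/N))·(1/√N)·Σ_b s_{ib} y_b and L_i^{(1)} = 1 + 1/(σ²+(K−1)/N),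
so the BP estimate G_i^{(1)}/L_i^{(1)} is the positive multiple 1/(1+σ²+(K−1)/N)
(independent of i) of the matched filter output (1/√N)·Σ_b s_{ib} y_b. -/
theorem bp_first_iteration_is_matched_filter
    (K N : ℕ) (hK : 1 ≤ K) (hN : 1 ≤ N) (σ : ℝ) (hσ : 0 < σ)
    (s : Fin K → Fin N → ℝ) (hs : ∀ i a, s i a = 1 ∨ s i a = -1)
    (y : Fin N → ℝ) :
    ∀ i : Fin K,
      BP.Gout σ s y 1 i =
        (1 / (σ ^ 2 + ((K : ℝ) - 1) / (N : ℝ))) *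
          ((1 / Real.sqrt N) * ∑ b : Fin N, s i b * y b) ∧
      BP.Lout σ s 1 i = 1 + 1 / (σ ^ 2 + ((K : ℝ) - 1) / (N : ℝ)) ∧
      BP.Gout σ s y 1 i / BP.Lout σ s 1 i =
        (1 / (1 + σ ^ 2 + ((K : ℝ) - 1) / (N : ℝ))) *
          ((1 / Real.sqrt N) * ∑ b : Fin N, s i b * y b) ∧
      0 < 1 / (1 + σ ^ 2 + ((K : ℝ) - 1) / (N : ℝ)) := by
  have hN' : (0 : ℝ) < N := by exact_mod_cast hN
  have hK' : (1 : ℝ) ≤ K := by exact_mod_cast hK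
  have hsq : ∀ i a, s i a ^ 2 = 1 := by
    intro i a
    rcases hs i a with h | h <;> rw [h] <;> norm_num
  have hnn : 0 ≤ ((K : ℝ) - 1) / (N : ℝ) := div_nonneg (by linarith) hN'.le
  have hσ2 : 0 < σ ^ 2 := by positivity
  have hh : ∀ b i, BP.lamHat σ s (BP.lam σ s 0) b i = σ ^ 2 + ((K : ℝ) - 1) / (N : ℝ) := by
    intro b i
    simp only [BP.lamHat, BP.lam, hsq, div_one, Finset.sum_const, nsmul_eq_mul, mul_one,
      Finset.card_erase_of_mem (Finset.mem_univ i), Finset.card_univ, Fintype.card_fin]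
    rw [Nat.cast_sub hK]
    push_cast
    ring
  have hg : ∀ b i, BP.gamHat s y (BP.lam σ s 0) (BP.gam σ s y 0) b i = y b := by
    intro b i
    simp [BP.gamHat, BP.gam]
  intro i
  have hG : BP.Gout σ s y 1 i =
        (1 / (σ ^ 2 + ((K : ℝ) - 1) / (N : ℝ))) *
          ((1 / Real.sqrt N) * ∑ b : Fin N, s i b * y b) := by
    simp only [BP.Gout, hh, hg]
    rw [mul_left_comm]
    congr 1
    rw [Finset.mul_sum]
    refine Finset.sum_congr rfl fun b _ => ?_
    ring
  have hL : BP.Lout σ s 1 i = 1 + 1 / (σ ^ 2 + ((K : ℝ) - 1) / (N : ℝ)) := by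
    simp only [BP.Lout, hh, hsq, Finset.sum_const, nsmul_eq_mul, Finset.card_univ,
      Fintype.card_fin]
    rw [← mul_assoc, one_div_mul_cancel hN'.ne', one_mul]
  refine ⟨hG, hL, ?_, by positivity⟩
  rw [hG, hL, add_assoc 1 (σ ^ 2)]
  generalize (1 / Real.sqrt N) * ∑ b : Fin N, s i b * y b = M
  have hD : 0 < σ ^ 2 + ((K : ℝ) - 1) / (N : ℝ) := by linarith
  generalize σ ^ 2 + ((K : ℝ) - 1) / (N : ℝ) = D at hD
  have h1 : 1 + D ≠ 0 := by linarith
  have h2 : 1 + 1 / D = (1 + D) / D := by field_simp; ring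
  rw [h2]
  field_simp
end
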